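/- arXiv:2601.21195 — 2 statements merged into one kernel-verified Lean document; each statement's English description precedes it below -/
import Mathlib

section
/- Let q be a prime power and x = (x_1,…,x_n) arbitrary weights. Then for every coset gB ∈ G/B and every permutation π ∈ S_n: proj_{S_n}( gB · T_{G/B}(q,x) ) = proj_{S_n}(gB) · T_{S_n}(q,x), and incl_{G/B}( π · T_{S_n}(q,x) ) = incl_{G/B}(π) · T_{G/B}(q,x). That is, the projection and inclusion maps intertwine the q-Tsetlin library operators on ℂ[G/B] and on ℂS_n. -/
open scoped Classical
set_option linter.unusedSectionVars false
set_option synthInstance.maxHeartbeats 1000000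
set_option maxHeartbeats 1000000

noncomputable section

namespace QTsetlin

/-- `M` is upper triangular. -/
def upperTri {F : Type} [Field F] {n : ℕ} (M : Matrix (Fin n) (Fin n) F) : Prop :=
  ∀ i j : Fin n, j < i → M i j = 0

/-- `M` is lower triangular. -/
def lowerTri {F : Type} [Field F] {n : ℕ} (M : Matrix (Fin n) (Fin n) F) : Prop :=
  ∀ i j : Fin n, i < j → M i j = 0

variable (F : Type) [Field F] [Fintype F] [DecidableEq F] (n : ℕ)

/-- The general linear group `G = GL_n(F_q)`. -/
abbrev GLn := GL (Fin n) F

/-- The Borel subgroup `B` of invertible upper triangular matrices. -/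
def Bsub : Subgroup (GLn F n) where
  carrier := {g | upperTri (g : Matrix (Fin n) (Fin n) F)}
  one_mem' := by
    intro i j hij
    simp [Matrix.one_apply, (Fin.ne_of_lt hij).symm]
  mul_mem' := by
    intro a b ha hb i j hij
    exact Matrix.BlockTriangular.mul ha hb hij
  inv_mem' := by
    intro a ha
    have hdet : IsUnit ((a : Matrix (Fin n) (Fin n) F).det) :=
      (Matrix.isUnit_iff_isUnit_det _).mp a.isUnit
    have hinv : Invertible (a : Matrix (Fin n) (Fin n) F) :=
      Matrix.invertibleOfIsUnitDet _ hdet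
    have h2 : ((a : Matrix (Fin n) (Fin n) F)⁻¹).BlockTriangular (id : Fin n → Fin n) :=
      Matrix.blockTriangular_inv_of_blockTriangular ha
    show upperTri ((a⁻¹ : GLn F n) : Matrix (Fin n) (Fin n) F)
    rw [show ((a⁻¹ : GLn F n) : Matrix (Fin n) (Fin n) F)
        = (a : Matrix (Fin n) (Fin n) F)⁻¹ from Matrix.coe_units_inv a]
    exact h2

/-- The set of cosets `G/B`. -/
abbrev Cosets := GLn F n ⧸ Bsub F n

/-- permutation matrix of `π`: entry 1 in positions `(π j, j)`. -/
def permMat (π : Equiv.Perm (Fin n)) : Matrix (Fin n) (Fin n) F :=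
  fun i j => if π j = i then 1 else 0

lemma permMat_mul (π σ : Equiv.Perm (Fin n)) :
    permMat F n π * permMat F n σ = permMat F n (π * σ) := by
  ext i j
  rw [Matrix.mul_apply]
  simp only [permMat, mul_ite, ite_mul, one_mul, mul_one, mul_zero, zero_mul]
  rw [Finset.sum_eq_single (σ j)]
  · by_cases h : π (σ j) = i <;> simp [Equiv.Perm.mul_apply, h]
  · intro k _ hk
    simp [hk.symm]
  · simp

lemma permMat_one : permMat F n 1 = 1 := by
  ext i j
  simp [permMat, Matrix.one_apply, eq_comm]

/-- The permutation matrix of `π`, as an element of `GL_n(F)`. -/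
def permGL (π : Equiv.Perm (Fin n)) : GLn F n :=
  ⟨permMat F n π, permMat F n π⁻¹,
    by rw [permMat_mul, mul_inv_cancel, permMat_one],
    by rw [permMat_mul, inv_mul_cancel, permMat_one]⟩

/-- `f_i(t)`: identity matrix with an extra entry `t` in position `(r, c)`, as an
element of `GL_n(F)`. -/
def transvGL (r c : Fin n) (h : r ≠ c) (t : F) : GLn F n :=
  ⟨Matrix.transvection r c t, Matrix.transvection r c (-t),
    by rw [Matrix.transvection_mul_transvection_same _ _ h, add_neg_cancel,
      Matrix.transvection_zero],
    by rw [Matrix.transvection_mul_transvection_same _ _ h, neg_add_cancel,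
      Matrix.transvection_zero]⟩

variable (K : Type) [Field K]

/-- Matrix (row convention: row `gB` is `(gB) · T_{k+1}`) of the Hecke generator `T_{k+1}`
(paper indexing) on `ℂ[G/B]`:
`(gB)·T_i = g s_i B + ∑_{t ≠ 0} g f_i(t) B`, where `s_i` swaps (0-based) positions `k, k+1`
and `f_i(t)` has an extra entry `t` in (0-based) position `(k+1, k)`. -/
def genGB (k : ℕ) : Matrix (Cosets F n) (Cosets F n) K := fun C D =>
  if h : k + 1 < n then
    (if (QuotientGroup.mk (C.out * permGL F n
          (Equiv.swap ⟨k, Nat.lt_of_succ_lt h⟩ ⟨k + 1, h⟩)) : Cosets F n) = D then 1 else 0)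
    + ((Finset.univ.filter fun t : F => t ≠ 0 ∧
        (QuotientGroup.mk (C.out * transvGL F n ⟨k + 1, h⟩ ⟨k, Nat.lt_of_succ_lt h⟩
          (fun hc => by simp [Fin.ext_iff] at hc) t) : Cosets F n) = D).card : K)
  else 0

/-- Matrix of the product `T_k T_{k-1} ⋯ T_1` (paper indexing) on `ℂ[G/B]`. -/
def prodGenGB : ℕ → Matrix (Cosets F n) (Cosets F n) K
  | 0 => 1
  | k + 1 => genGB F n K k * prodGenGB k

/-- The (0-based) row index of the leading entry (the pivot `1` of the distinguished coset
representative) in the first column of a representative of the coset `C`. -/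
def pivotRow (C : Cosets F n) : ℕ :=
  sInf {i : ℕ | ∃ h : i < n,
    ((C.out : GLn F n) : Matrix (Fin n) (Fin n) F) ⟨i, h⟩
      ⟨0, Nat.lt_of_le_of_lt (Nat.zero_le i) h⟩ ≠ 0}

/-- Matrix of the weighting operator `X_{G/B}(q,x)`, where `q` is the cardinality of the
field: `gB ↦ (x_i / q^{n-i}) gB` with `i` the row index of the leading 1 in the first
column of the distinguished representative of `gB`. -/
def XGB (x : Fin n → K) : Matrix (Cosets F n) (Cosets F n) K := fun C D =>
  if D = C then
    (if h : pivotRow F n C < n then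
      x ⟨pivotRow F n C, h⟩ / (Fintype.card F : K) ^ (n - 1 - pivotRow F n C)
    else 0)
  else 0

/-- Matrix of the q-Tsetlin library operator
`T_{G/B}(q,x) = (∑_{i=1}^n T_{i-1} ⋯ T_1) ∘ X_{G/B}(q,x)` on `ℂ[G/B]` (row convention). -/
def TGB (x : Fin n → K) : Matrix (Cosets F n) (Cosets F n) K :=
  (∑ k ∈ Finset.range n, prodGenGB F n K k) * XGB F n K x

/-- The coset `gB` belongs to the double coset `[π] = B⁻ π B`. -/
def inDC (π : Equiv.Perm (Fin n)) (C : Cosets F n) : Prop :=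
  ∃ l b : GLn F n, lowerTri (l : Matrix (Fin n) (Fin n) F) ∧
    upperTri (b : Matrix (Fin n) (Fin n) F) ∧
    C = QuotientGroup.mk (l * permGL F n π * b)

/-- Number of inversions of a permutation. -/
def invCount {m : ℕ} (π : Equiv.Perm (Fin m)) : ℕ :=
  (Finset.univ.filter fun p : Fin m × Fin m => p.1 < p.2 ∧ π p.2 < π p.1).card

/-- Matrix (row convention) of the Hecke generator `T_{k+1}` (paper indexing) on `ℂS_n`. -/
def genMatP (m : ℕ) {R : Type} [Field R] (q : R) (k : ℕ) :
    Matrix (Equiv.Perm (Fin m)) (Equiv.Perm (Fin m)) R := fun π σ =>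
  if h : k + 1 < m then
    if π ⟨k + 1, h⟩ < π ⟨k, Nat.lt_of_succ_lt h⟩ then
      (if σ = π * Equiv.swap ⟨k, Nat.lt_of_succ_lt h⟩ ⟨k + 1, h⟩ then q else 0)
    else
      (if σ = π * Equiv.swap ⟨k, Nat.lt_of_succ_lt h⟩ ⟨k + 1, h⟩ then 1 else 0)
        + (if σ = π then q - 1 else 0)
  else 0

/-- Matrix of the product `T_k T_{k-1} ⋯ T_1` (paper indexing) on `ℂS_n`. -/
def prodGenP (m : ℕ) {R : Type} [Field R] (q : R) :
    ℕ → Matrix (Equiv.Perm (Fin m)) (Equiv.Perm (Fin m)) R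
  | 0 => 1
  | k + 1 => genMatP m q k * prodGenP m q k

/-- Matrix of the weighting operator `X_{S_n}(q,x)`. -/
def XSnP (m : ℕ) {R : Type} [Field R] (q : R) (x : Fin m → R) :
    Matrix (Equiv.Perm (Fin m)) (Equiv.Perm (Fin m)) R := fun π σ =>
  if σ = π then
    (if h : 0 < m then x (π ⟨0, h⟩) / q ^ (m - 1 - (π ⟨0, h⟩ : ℕ)) else 0)
  else 0

/-- Matrix of the q-Tsetlin library operator `T_{S_n}(q,x)` on `ℂS_n` (row convention). -/
def TSnP (m : ℕ) {R : Type} [Field R] (q : R) (x : Fin m → R) :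
    Matrix (Equiv.Perm (Fin m)) (Equiv.Perm (Fin m)) R :=
  (∑ k ∈ Finset.range m, prodGenP m q k) * XSnP m q x

/-- The matrix of the projection `proj_{S_n} : ℂ[G/B] → ℂS_n`, `gB ↦ π` for `gB ∈ [π]`. -/
def projMat : Matrix (Cosets F n) (Equiv.Perm (Fin n)) K := fun C π =>
  if inDC F n π C then 1 else 0

/-- The matrix of the inclusion `incl_{G/B} : ℂS_n → ℂ[G/B]`,
`π ↦ q^{inv(π)} ∑_{gB ∈ [π]} gB`. -/
def inclMat : Matrix (Equiv.Perm (Fin n)) (Cosets F n) K := fun π C =>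
  if inDC F n π C then (Fintype.card F : K) ^ invCount π else 0

section helpers

set_option linter.unusedSimpArgs false

variable {F n}

lemma permMat_mul_apply (π : Equiv.Perm (Fin n)) (M : Matrix (Fin n) (Fin n) F) (i j : Fin n) :
    (permMat F n π * M) i j = M (π⁻¹ i) j := by
  rw [Matrix.mul_apply, Finset.sum_eq_single (π⁻¹ i)]
  · simp [permMat]
  · intro k _ hk
    have : π k ≠ i := fun h => hk (by rw [← h]; simp)
    simp [permMat, this]
  · simp

lemma mul_permMat_apply (π : Equiv.Perm (Fin n)) (M : Matrix (Fin n) (Fin n) F) (i j : Fin n) :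
    (M * permMat F n π) i j = M i (π j) := by
  rw [Matrix.mul_apply, Finset.sum_eq_single (π j)]
  · simp [permMat]
  · intro k _ hk
    simp [permMat, hk.symm]
  · simp

lemma permGL_mul (π σ : Equiv.Perm (Fin n)) :
    permGL F n (π * σ) = permGL F n π * permGL F n σ := by
  apply Units.ext
  exact (permMat_mul F n π σ).symm

lemma permGL_one : permGL F n 1 = 1 := by
  apply Units.ext
  exact permMat_one F n

lemma permGL_inv (π : Equiv.Perm (Fin n)) : (permGL F n π)⁻¹ = permGL F n π⁻¹ := by
  rw [inv_eq_iff_mul_eq_one, ← permGL_mul, mul_inv_cancel, permGL_one]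

lemma transvGL_inv (r c : Fin n) (h : r ≠ c) (t : F) :
    (transvGL F n r c h t)⁻¹ = transvGL F n r c h (-t) := by
  apply Units.ext
  rfl

lemma upper_mul {a b : GLn F n} (ha : upperTri (a : Matrix (Fin n) (Fin n) F))
    (hb : upperTri (b : Matrix (Fin n) (Fin n) F)) :
    upperTri ((a * b : GLn F n) : Matrix (Fin n) (Fin n) F) :=
  (Bsub F n).mul_mem (x := a) (y := b) ha hb

lemma upper_inv {a : GLn F n} (ha : upperTri (a : Matrix (Fin n) (Fin n) F)) :
    upperTri ((a⁻¹ : GLn F n) : Matrix (Fin n) (Fin n) F) :=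
  (Bsub F n).inv_mem (x := a) ha

lemma lower_mul {a b : GLn F n} (ha : lowerTri (a : Matrix (Fin n) (Fin n) F))
    (hb : lowerTri (b : Matrix (Fin n) (Fin n) F)) :
    lowerTri ((a * b : GLn F n) : Matrix (Fin n) (Fin n) F) := by
  intro i j hij
  have ha' : (a : Matrix (Fin n) (Fin n) F).BlockTriangular OrderDual.toDual :=
    fun i j h => ha i j h
  have hb' : (b : Matrix (Fin n) (Fin n) F).BlockTriangular OrderDual.toDual :=
    fun i j h => hb i j h
  exact (ha'.mul hb') hij

lemma lower_inv {a : GLn F n} (ha : lowerTri (a : Matrix (Fin n) (Fin n) F)) :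
    lowerTri ((a⁻¹ : GLn F n) : Matrix (Fin n) (Fin n) F) := by
  intro i j hij
  have ha' : (a : Matrix (Fin n) (Fin n) F).BlockTriangular OrderDual.toDual :=
    fun i j h => ha i j h
  have hdet : IsUnit ((a : Matrix (Fin n) (Fin n) F).det) :=
    (Matrix.isUnit_iff_isUnit_det _).mp a.isUnit
  have hinv : Invertible (a : Matrix (Fin n) (Fin n) F) :=
    Matrix.invertibleOfIsUnitDet _ hdet
  rw [show ((a⁻¹ : GLn F n) : Matrix (Fin n) (Fin n) F)
        = (a : Matrix (Fin n) (Fin n) F)⁻¹ from Matrix.coe_units_inv a]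
  exact (Matrix.blockTriangular_inv_of_blockTriangular ha') hij

lemma upper_diag {a : GLn F n} (ha : upperTri (a : Matrix (Fin n) (Fin n) F)) (i : Fin n) :
    (a : Matrix (Fin n) (Fin n) F) i i ≠ 0 := by
  have hdet : IsUnit ((a : Matrix (Fin n) (Fin n) F).det) :=
    (Matrix.isUnit_iff_isUnit_det _).mp a.isUnit
  rw [Matrix.det_of_isUpperTriangular (fun i j h => ha i j h)] at hdet
  exact (Finset.prod_ne_zero_iff.mp hdet.ne_zero) i (Finset.mem_univ _)

lemma lower_diag {a : GLn F n} (ha : lowerTri (a : Matrix (Fin n) (Fin n) F)) (i : Fin n) :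
    (a : Matrix (Fin n) (Fin n) F) i i ≠ 0 := by
  have hdet : IsUnit ((a : Matrix (Fin n) (Fin n) F).det) :=
    (Matrix.isUnit_iff_isUnit_det _).mp a.isUnit
  rw [Matrix.det_of_isLowerTriangular _ (fun i j h => ha i j h)] at hdet
  exact (Finset.prod_ne_zero_iff.mp hdet.ne_zero) i (Finset.mem_univ _)

lemma transv_upper (r c : Fin n) (h : r ≠ c) (hrc : r < c) (t : F) :
    upperTri ((transvGL F n r c h t : GLn F n) : Matrix (Fin n) (Fin n) F) := by
  intro i j hij
  show Matrix.transvection r c t i j = 0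
  have h1 : i ≠ j := hij.ne'
  have h2 : ¬ (r = i ∧ c = j) := by rintro ⟨rfl, rfl⟩; exact absurd hrc hij.not_gt
  simp [Matrix.transvection, Matrix.one_apply, h1, Matrix.single_apply, h2]

lemma transv_lower (r c : Fin n) (h : r ≠ c) (hrc : c < r) (t : F) :
    lowerTri ((transvGL F n r c h t : GLn F n) : Matrix (Fin n) (Fin n) F) := by
  intro i j hij
  show Matrix.transvection r c t i j = 0
  have h1 : i ≠ j := hij.ne
  have h2 : ¬ (r = i ∧ c = j) := by rintro ⟨rfl, rfl⟩; exact absurd hrc hij.not_gt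
  simp [Matrix.transvection, Matrix.one_apply, h1, Matrix.single_apply, h2]

lemma perm_transv (π : Equiv.Perm (Fin n)) (r c : Fin n) (h : r ≠ c) (t : F) :
    permGL F n π * transvGL F n r c h t =
      transvGL F n (π r) (π c) (fun hc => h (π.injective hc)) t * permGL F n π := by
  apply Units.ext
  show permMat F n π * Matrix.transvection r c t =
    Matrix.transvection (π r) (π c) t * permMat F n π
  ext i j
  rw [permMat_mul_apply, mul_permMat_apply]
  have e1 : π⁻¹ i = j ↔ i = π j := by
    rw [Equiv.Perm.inv_eq_iff_eq]
  have e2 : r = π⁻¹ i ↔ π r = i := by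
    rw [Equiv.Perm.eq_inv_iff_eq]
  simp only [Matrix.transvection, Matrix.add_apply, Matrix.one_apply, Matrix.single_apply, e1, e2,
    π.injective.eq_iff]

/-- `g` lies in the double coset of `π`. -/
def dc (π : Equiv.Perm (Fin n)) (g : GLn F n) : Prop :=
  ∃ l b : GLn F n, lowerTri (l : Matrix (Fin n) (Fin n) F) ∧
    upperTri (b : Matrix (Fin n) (Fin n) F) ∧ g = l * permGL F n π * b

lemma dc_mul_upper {π : Equiv.Perm (Fin n)} {g b : GLn F n} (h : dc π g)
    (hb : upperTri (b : Matrix (Fin n) (Fin n) F)) : dc π (g * b) := by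
  obtain ⟨l, c, hl, hc, rfl⟩ := h
  exact ⟨l, c * b, hl, upper_mul hc hb, by group⟩

lemma dc_lower_mul {π : Equiv.Perm (Fin n)} {g l : GLn F n} (h : dc π g)
    (hl : lowerTri (l : Matrix (Fin n) (Fin n) F)) : dc π (l * g) := by
  obtain ⟨l', c, hl', hc, rfl⟩ := h
  exact ⟨l * l', c, lower_mul hl hl', hc, by group⟩

lemma inDC_mk (π : Equiv.Perm (Fin n)) (g : GLn F n) :
    inDC F n π (QuotientGroup.mk g) ↔ dc π g := by
  constructor
  · rintro ⟨l, b, hl, hb, h⟩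
    have h' : g⁻¹ * (l * permGL F n π * b) ∈ Bsub F n := QuotientGroup.eq.mp h
    have h2 := (Bsub F n).inv_mem h'
    refine ⟨l, b * (g⁻¹ * (l * permGL F n π * b))⁻¹, hl, upper_mul hb h2, by group⟩
  · rintro ⟨l, b, hl, hb, rfl⟩
    exact ⟨l, b, hl, hb, rfl⟩

lemma inDC_out (π : Equiv.Perm (Fin n)) (C : Cosets F n) :
    inDC F n π C ↔ dc π C.out := by
  rw [← inDC_mk, QuotientGroup.out_eq']

lemma perm_eq_one_of_le (σ : Equiv.Perm (Fin n)) (h : ∀ j, σ j ≤ j) : σ = 1 := by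
  have key : ∀ m : ℕ, ∀ j : Fin n, j.val = m → σ j = j := by
    intro m
    induction m using Nat.strong_induction_on with
    | _ m ih =>
      intro j hj
      by_contra hne
      have hlt : σ j < j := lt_of_le_of_ne (h j) hne
      have := ih (σ j).val (by rw [← hj]; exact hlt) (σ j) rfl
      exact hne (σ.injective this)
  ext j
  simp [key j.val j rfl]

lemma dc_unique {π σ : Equiv.Perm (Fin n)} {g : GLn F n} (h1 : dc π g) (h2 : dc σ g) : π = σ := by
  obtain ⟨l, b, hl, hb, rfl⟩ := h1
  obtain ⟨l', b', hl', hb', h⟩ := h2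
  have hL := lower_mul (lower_inv hl') hl
  have hB := upper_mul hb' (upper_inv hb)
  have e : (l'⁻¹ * l) * permGL F n π = permGL F n σ * (b' * b⁻¹) := by
    calc (l'⁻¹ * l) * permGL F n π = l'⁻¹ * (l * permGL F n π * b) * b⁻¹ := by group
      _ = _ := by rw [h]; group
  generalize l'⁻¹ * l = L at *
  generalize b' * b⁻¹ = U at *
  have e' : (L : Matrix (Fin n) (Fin n) F) * permMat F n π
      = permMat F n σ * (U : Matrix (Fin n) (Fin n) F) := congrArg Units.val e
  have : σ⁻¹ * π = 1 := by
    apply perm_eq_one_of_le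
    intro j
    by_contra hc
    have h3 := congrFun (congrFun e' (π j)) j
    rw [mul_permMat_apply, permMat_mul_apply] at h3
    have h4 : U.val (σ⁻¹ (π j)) j = 0 := hB _ _ (not_le.mp hc)
    exact lower_diag hL _ (h3.trans h4)
  rw [inv_mul_eq_one] at this
  exact this.symm

/-- upper triangular except for a nonzero entry in position `(k1, k)`. -/
def Zp (k k1 : Fin n) (M : Matrix (Fin n) (Fin n) F) : Prop :=
  (∀ i j, j < i → ¬ (i = k1 ∧ j = k) → M i j = 0) ∧ M k1 k ≠ 0

lemma swap_lt {k k1 : Fin n} (hk : k1.val = k.val + 1) {i j : Fin n} (hij : j < i)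
    (h : ¬ (i = k1 ∧ j = k)) : Equiv.swap k k1 j < Equiv.swap k k1 i := by
  have h' : ¬ (i.val = k1.val ∧ j.val = k.val) := by
    simpa [Fin.ext_iff] using h
  simp only [Equiv.swap_apply_def, Fin.ext_iff, Fin.lt_def] at *
  split_ifs <;> omega

lemma Zp_upper_swap {k k1 : Fin n} (hk : k1.val = k.val + 1) {b : GLn F n}
    (hb : upperTri (b : Matrix (Fin n) (Fin n) F)) :
    Zp k k1 ((b * permGL F n (Equiv.swap k k1) : GLn F n) : Matrix (Fin n) (Fin n) F) := by
  have e : ∀ i j, ((b * permGL F n (Equiv.swap k k1) : GLn F n) : Matrix (Fin n) (Fin n) F) i j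
      = (b : Matrix (Fin n) (Fin n) F) i (Equiv.swap k k1 j) := fun i j => mul_permMat_apply _ _ i j
  constructor
  · intro i j hij h
    rw [e]
    apply hb
    have h' : ¬ (i.val = k1.val ∧ j.val = k.val) := by
      simpa [Fin.ext_iff] using h
    simp only [Equiv.swap_apply_def, Fin.ext_iff, Fin.lt_def] at *
    split_ifs <;> omega
  · rw [e, Equiv.swap_apply_left]
    exact upper_diag hb k1

lemma Zp_swap_upper {k k1 : Fin n} (hk : k1.val = k.val + 1) {b : GLn F n}
    (hb : upperTri (b : Matrix (Fin n) (Fin n) F)) :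
    Zp k k1 ((permGL F n (Equiv.swap k k1) * b : GLn F n) : Matrix (Fin n) (Fin n) F) := by
  have e : ∀ i j, ((permGL F n (Equiv.swap k k1) * b : GLn F n) : Matrix (Fin n) (Fin n) F) i j
      = (b : Matrix (Fin n) (Fin n) F) (Equiv.swap k k1 i) j := fun i j => by
    have := permMat_mul_apply (Equiv.swap k k1) (b : Matrix (Fin n) (Fin n) F) i j
    rwa [Equiv.swap_inv] at this
  constructor
  · intro i j hij h
    rw [e]
    apply hb
    have h' : ¬ (i.val = k1.val ∧ j.val = k.val) := by
      simpa [Fin.ext_iff] using h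
    simp only [Equiv.swap_apply_def, Fin.ext_iff, Fin.lt_def] at *
    split_ifs <;> omega
  · rw [e, Equiv.swap_apply_right]
    exact upper_diag hb k

lemma Zp_upper_transv {k k1 : Fin n} (hk : k1.val = k.val + 1) (hne : k1 ≠ k) {b : GLn F n}
    (hb : upperTri (b : Matrix (Fin n) (Fin n) F)) {t : F} (ht : t ≠ 0) :
    Zp k k1 ((b * transvGL F n k1 k hne t : GLn F n) : Matrix (Fin n) (Fin n) F) := by
  show Zp k k1 ((b : Matrix (Fin n) (Fin n) F) * Matrix.transvection k1 k t)
  constructor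
  · intro i j hij h
    by_cases hj : j = k
    · subst hj
      have : k1 < i := by
        have h' : ¬ i.val = k1.val := by simpa [Fin.ext_iff] using h
        simp only [Fin.lt_def] at *; omega
      rw [Matrix.mul_transvection_apply_same, hb _ _ hij, hb _ _ this]; simp
    · rw [Matrix.mul_transvection_apply_of_ne _ _ _ _ hj, hb _ _ hij]
  · rw [Matrix.mul_transvection_apply_same, hb k1 k (by simp only [Fin.lt_def]; omega), zero_add]
    exact mul_ne_zero ht (upper_diag hb k1)

lemma Zp_transv_upper {k k1 : Fin n} (hk : k1.val = k.val + 1) (hne : k1 ≠ k) {b : GLn F n}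
    (hb : upperTri (b : Matrix (Fin n) (Fin n) F)) {t : F} (ht : t ≠ 0) :
    Zp k k1 ((transvGL F n k1 k hne t * b : GLn F n) : Matrix (Fin n) (Fin n) F) := by
  show Zp k k1 (Matrix.transvection k1 k t * (b : Matrix (Fin n) (Fin n) F))
  constructor
  · intro i j hij h
    by_cases hj : i = k1
    · subst hj
      have : j < k := by
        have h' : ¬ j.val = k.val := by simpa [Fin.ext_iff] using h
        simp only [Fin.lt_def] at *; omega
      rw [Matrix.transvection_mul_apply_same, hb _ _ hij, hb _ _ this]; simp
    · rw [Matrix.transvection_mul_apply_of_ne _ _ _ _ hj, hb _ _ hij]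
  · rw [Matrix.transvection_mul_apply_same, hb k1 k (by simp only [Fin.lt_def]; omega), zero_add]
    exact mul_ne_zero ht (upper_diag hb k)

/-- for `m` in `Zp`: `f(-t) m` is upper triangular iff `e = t α`. -/
lemma transv_mul_upper_iff {k k1 : Fin n} (hk : k1.val = k.val + 1) (hne : k1 ≠ k) {m : GLn F n}
    (hm : Zp k k1 (m : Matrix (Fin n) (Fin n) F)) (t : F) :
    upperTri ((transvGL F n k1 k hne t * m : GLn F n) : Matrix (Fin n) (Fin n) F) ↔
      m.val k1 k + t * m.val k k = 0 := by
  show upperTri (Matrix.transvection k1 k t * (m : Matrix (Fin n) (Fin n) F)) ↔ _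
  constructor
  · intro h
    rw [← h k1 k (by simp only [Fin.lt_def]; omega), Matrix.transvection_mul_apply_same]
  · intro h i j hij
    by_cases hi : i = k1
    · subst hi
      rw [Matrix.transvection_mul_apply_same]
      by_cases hj : j = k
      · subst hj; exact h
      · have h' : ¬ j.val = k.val := by simpa [Fin.ext_iff] using hj
        have : j < k := by
          simp only [Fin.lt_def] at *; omega
        rw [hm.1 i j hij (by simp [hj]), hm.1 k j this (fun h => hne h.1.symm)]; simp
    · rw [Matrix.transvection_mul_apply_of_ne _ _ _ _ hi, hm.1 i j hij (by simp [hi])]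

lemma swap_mul_upper_iff {k k1 : Fin n} (hk : k1.val = k.val + 1) {m : GLn F n}
    (hm : Zp k k1 (m : Matrix (Fin n) (Fin n) F)) :
    upperTri ((permGL F n (Equiv.swap k k1) * m : GLn F n) : Matrix (Fin n) (Fin n) F) ↔
      m.val k k = 0 := by
  have e : ∀ i j, ((permGL F n (Equiv.swap k k1) * m : GLn F n) : Matrix (Fin n) (Fin n) F) i j
      = (m : Matrix (Fin n) (Fin n) F) (Equiv.swap k k1 i) j := fun i j => by
    have := permMat_mul_apply (Equiv.swap k k1) (m : Matrix (Fin n) (Fin n) F) i j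
    rwa [Equiv.swap_inv] at this
  constructor
  · intro h
    rw [← h k1 k (by simp only [Fin.lt_def]; omega), e, Equiv.swap_apply_right]
  · intro h i j hij
    rw [e]
    by_cases hi : i = k1
    · subst hi
      rw [Equiv.swap_apply_right]
      by_cases hj : j = k
      · subst hj; exact h
      · have h' : ¬ j.val = k.val := by simpa [Fin.ext_iff] using hj
        apply hm.1
        · simp only [Fin.lt_def] at *; omega
        · exact fun h => hj h.2
    · by_cases hi2 : i = k
      · subst hi2
        rw [Equiv.swap_apply_left]
        apply hm.1
        · simp only [Fin.lt_def] at *; omega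
        · exact fun h => hij.ne h.2
      · rw [Equiv.swap_apply_of_ne_of_ne hi2 hi]
        exact hm.1 _ _ hij (fun h => hi h.1)

lemma Zp_swap {k k1 : Fin n} (hk : k1.val = k.val + 1) {m : GLn F n}
    (hm : Zp k k1 (m : Matrix (Fin n) (Fin n) F)) (h0 : m.val k k ≠ 0) :
    Zp k k1 ((permGL F n (Equiv.swap k k1) * m : GLn F n) : Matrix (Fin n) (Fin n) F) := by
  have hne : k1 ≠ k := by intro h; simp [Fin.ext_iff] at h; omega
  have h1 := (transv_mul_upper_iff hk hne hm (-(m.val k1 k / m.val k k))).2 (by field_simp; ring)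
  have e : ∀ i j, ((permGL F n (Equiv.swap k k1) * m : GLn F n) : Matrix (Fin n) (Fin n) F) i j
      = (m : Matrix (Fin n) (Fin n) F) (Equiv.swap k k1 i) j := fun i j => by
    have := permMat_mul_apply (Equiv.swap k k1) (m : Matrix (Fin n) (Fin n) F) i j
    rwa [Equiv.swap_inv] at this
  constructor
  · intro i j hij h
    rw [e]
    by_cases hi : i = k1
    · subst hi
      rw [Equiv.swap_apply_right]
      have h' : ¬ j.val = k.val := by simpa [Fin.ext_iff] using h
      apply hm.1
      · simp only [Fin.lt_def] at *; omega
      · exact fun h => hne h.1.symm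
    · by_cases hi2 : i = k
      · subst hi2
        rw [Equiv.swap_apply_left]
        apply hm.1
        · simp only [Fin.lt_def] at *; omega
        · exact fun h => hij.ne h.2
      · rw [Equiv.swap_apply_of_ne_of_ne hi2 hi]
        exact hm.1 _ _ hij (fun h => hi h.1)
  · rw [e, Equiv.swap_apply_right]; exact h0

lemma swap_sq (k k1 : Fin n) :
    permGL F n (Equiv.swap k k1) * permGL F n (Equiv.swap k k1) = 1 := by
  rw [← permGL_mul, Equiv.swap_mul_self, permGL_one]

/-- `π m` for `m` in `Zp` with `α ≠ 0` and `π` ascending. -/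
lemma dc_asc_ne {k k1 : Fin n} (hk : k1.val = k.val + 1) (π : Equiv.Perm (Fin n))
    (hπ : π k < π k1) {m : GLn F n} (hm : Zp k k1 (m : Matrix (Fin n) (Fin n) F))
    (h0 : m.val k k ≠ 0) : dc π (permGL F n π * m) := by
  have hne : k1 ≠ k := by intro h; simp [Fin.ext_iff] at h; omega
  have h1 := (transv_mul_upper_iff hk hne hm (-(m.val k1 k / m.val k k))).2 (by field_simp; ring)
  refine ⟨_, _, transv_lower (π k1) (π k) (fun hc => hne (π.injective hc)) hπ
    (m.val k1 k / m.val k k), h1, ?_⟩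
  rw [← perm_transv π k1 k hne, ← transvGL_inv]
  group

lemma dc_zero {k k1 : Fin n} (hk : k1.val = k.val + 1) (π : Equiv.Perm (Fin n))
    {m : GLn F n} (hm : Zp k k1 (m : Matrix (Fin n) (Fin n) F))
    (h0 : m.val k k = 0) : dc (π * Equiv.swap k k1) (permGL F n π * m) := by
  have h1 := (swap_mul_upper_iff hk hm).2 h0
  refine ⟨1, _, ?_, h1, ?_⟩
  · intro i j hij
    simp [Matrix.one_apply, hij.ne]
  · rw [permGL_mul, one_mul, mul_assoc, ← mul_assoc (permGL F n (Equiv.swap k k1)), swap_sq, one_mul]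

lemma dc_desc {k k1 : Fin n} (hk : k1.val = k.val + 1) (π : Equiv.Perm (Fin n))
    (hπ : π k1 < π k) {m : GLn F n} (hm : Zp k k1 (m : Matrix (Fin n) (Fin n) F)) :
    dc (π * Equiv.swap k k1) (permGL F n π * m) := by
  by_cases h0 : m.val k k = 0
  · exact dc_zero hk π hm h0
  · have h1 := dc_asc_ne hk (π * Equiv.swap k k1) (by simpa using hπ) (Zp_swap hk hm h0) ?_
    · rwa [permGL_mul, mul_assoc, ← mul_assoc (permGL F n (Equiv.swap k k1)), swap_sq,
        one_mul] at h1
    · have := permMat_mul_apply (Equiv.swap k k1) (m : Matrix (Fin n) (Fin n) F) k k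
      rw [Equiv.swap_inv, Equiv.swap_apply_left] at this
      exact fun h => hm.2 (this ▸ h)

lemma dc_Zp {k k1 : Fin n} (hk : k1.val = k.val + 1) (π : Equiv.Perm (Fin n))
    {m : GLn F n} (hm : Zp k k1 (m : Matrix (Fin n) (Fin n) F)) :
    ∃ σ, dc σ (permGL F n π * m) := by
  have hne : k ≠ k1 := by intro h; simp [Fin.ext_iff] at h; omega
  rcases lt_or_gt_of_ne (fun h => hne (π.injective h)) with h | h
  · by_cases h0 : m.val k k = 0
    · exact ⟨_, dc_zero hk π hm h0⟩
    · exact ⟨_, dc_asc_ne hk π h hm h0⟩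
  · exact ⟨_, dc_desc hk π h hm⟩

/-- right multiplication by `m` preserves the union of the double cosets. -/
def St (m : GLn F n) : Prop := ∀ g : GLn F n, (∃ π, dc π g) → ∃ π, dc π (g * m)

lemma St_mul {a b : GLn F n} (ha : St a) (hb : St b) : St (a * b) := by
  intro g hg
  rw [← mul_assoc]
  exact hb _ (ha _ hg)

lemma St_upper {b : GLn F n} (hb : upperTri (b : Matrix (Fin n) (Fin n) F)) : St b := by
  rintro g ⟨π, h⟩
  exact ⟨π, dc_mul_upper h hb⟩

lemma St_swap {k k1 : Fin n} (hk : k1.val = k.val + 1) : St (permGL F n (Equiv.swap k k1)) := by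
  rintro g ⟨π, l, b, hl, hb, rfl⟩
  obtain ⟨σ, h⟩ := dc_Zp hk π (Zp_upper_swap hk hb)
  refine ⟨σ, ?_⟩
  rw [mul_assoc, mul_assoc]
  exact dc_lower_mul h hl

lemma St_perm (π : Equiv.Perm (Fin n)) : St (permGL F n π) := by
  cases n with
  | zero =>
    have : π = 1 := Subsingleton.elim _ _
    subst this
    rw [permGL_one]
    intro g hg
    rwa [mul_one]
  | succ m =>
    have h : π ∈ Submonoid.closure
        (Set.range fun i : Fin m ↦ Equiv.swap i.castSucc i.succ) := by
      rw [Equiv.Perm.mclosure_swap_castSucc_succ]; trivial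
    induction h using Submonoid.closure_induction with
    | mem x hx =>
      obtain ⟨i, rfl⟩ := hx
      exact St_swap (by simp)
    | one =>
      rw [permGL_one]
      intro g hg
      rwa [mul_one]
    | mul x y _ _ hx hy =>
      rw [permGL_mul]; exact St_mul hx hy

lemma St_transv (r c : Fin n) (h : r ≠ c) (t : F) : St (transvGL F n r c h t) := by
  rcases lt_or_gt_of_ne h with h1 | h1
  · exact St_upper (transv_upper r c h h1 t)
  · have e := perm_transv (Equiv.swap r c) r c h t
    have e2 : transvGL F n r c h t = (permGL F n (Equiv.swap r c))⁻¹ *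
        (permGL F n (Equiv.swap r c) * transvGL F n r c h t) := by group
    rw [e2, e, permGL_inv]
    refine St_mul (St_perm _) (St_mul (St_upper (transv_upper _ _ _ ?_ t)) (St_perm _))
    simpa using h1

lemma St_all (m : GLn F n) : St m := by
  have key : ∀ m' : GLn F n, m'.val = m.val → St m' := by
    have hdet : IsUnit ((m : Matrix (Fin n) (Fin n) F).det) :=
      (Matrix.isUnit_iff_isUnit_det _).mp m.isUnit
    refine Matrix.diagonal_transvection_induction_of_det_ne_zero
      (fun M => ∀ m' : GLn F n, m'.val = M → St m') m.val hdet.ne_zero ?_ ?_ ?_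
    · intro D _ m' hm'
      apply St_upper
      rw [hm']
      intro i j hij
      exact Matrix.diagonal_apply_ne _ hij.ne'
    · intro t m' hm'
      have : m' = transvGL F n t.i t.j t.hij t.c := Units.ext hm'
      rw [this]
      exact St_transv _ _ _ _
    · intro A B hA hB hPA hPB m' hm'
      have : m' = Matrix.GeneralLinearGroup.mkOfDetNeZero A hA *
          Matrix.GeneralLinearGroup.mkOfDetNeZero B hB := Units.ext hm'
      rw [this]
      exact St_mul (hPA _ rfl) (hPB _ rfl)
  exact key m rfl

lemma exists_dc (g : GLn F n) : ∃ π, dc π g := by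
  have h1 : dc (1 : Equiv.Perm (Fin n)) (1 : GLn F n) := by
    refine ⟨1, 1, ?_, (Bsub F n).one_mem, by rw [permGL_one]; simp⟩
    intro i j hij
    simp [Matrix.one_apply, hij.ne]
  simpa using St_all g 1 ⟨1, h1⟩

/-- the permutation of a group element -/
def wp (g : GLn F n) : Equiv.Perm (Fin n) := (exists_dc g).choose

lemma dc_iff (π : Equiv.Perm (Fin n)) (g : GLn F n) : dc π g ↔ π = wp g := by
  constructor
  · intro h
    exact dc_unique h (exists_dc g).choose_spec
  · rintro rfl
    exact (exists_dc g).choose_spec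

/-- the permutation of a coset -/
def wc (C : Cosets F n) : Equiv.Perm (Fin n) := wp C.out

lemma projMat_apply (C : Cosets F n) (π : Equiv.Perm (Fin n)) :
    projMat F n K C π = if π = wc C then 1 else 0 := by
  simp only [projMat, inDC_out, dc_iff, wc]
  congr

lemma projMat_mk (g : GLn F n) (π : Equiv.Perm (Fin n)) :
    projMat F n K (QuotientGroup.mk g) π = if π = wp g then 1 else 0 := by
  simp only [projMat, inDC_mk, dc_iff]

lemma inclMat_apply (C : Cosets F n) (π : Equiv.Perm (Fin n)) :
    inclMat F n K π C = if π = wc C then (Fintype.card F : K) ^ invCount π else 0 := by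
  simp only [inclMat, inDC_out, dc_iff, wc]
  congr

lemma gen_mul_proj_apply (k : ℕ) (h : k + 1 < n) (C : Cosets F n) (σ : Equiv.Perm (Fin n)) :
    (genGB F n K k * projMat F n K) C σ =
      (if σ = wp (C.out * permGL F n
          (Equiv.swap ⟨k, Nat.lt_of_succ_lt h⟩ ⟨k + 1, h⟩)) then 1 else 0)
      + ∑ t : F, if t ≠ 0 then
        (if σ = wp (C.out * transvGL F n ⟨k + 1, h⟩ ⟨k, Nat.lt_of_succ_lt h⟩
          (fun hc => by simp [Fin.ext_iff] at hc) t) then (1 : K) else 0) else 0 := by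
  rw [Matrix.mul_apply]
  simp only [genGB, dif_pos h, Finset.natCast_card_filter, add_mul, Finset.sum_add_distrib,
    Finset.sum_mul]
  congr 1
  · simp only [ite_mul, one_mul, zero_mul, Finset.sum_ite_eq, Finset.mem_univ, if_true, projMat_mk]
  · rw [Finset.sum_comm]
    refine Finset.sum_congr rfl fun t _ => ?_
    by_cases ht : t = 0
    · simp [ht]
    · simp only [ne_eq, ht, not_false_eq_true, true_and, if_true, ite_mul, one_mul, zero_mul,
        Finset.sum_ite_eq, Finset.mem_univ, projMat_mk]

lemma wp_Zp {k k1 : Fin n} (hk : k1.val = k.val + 1) {l m : GLn F n} (π : Equiv.Perm (Fin n))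
    (hl : lowerTri (l : Matrix (Fin n) (Fin n) F))
    (hm : Zp k k1 (m : Matrix (Fin n) (Fin n) F)) :
    wp (l * permGL F n π * m) =
      if π k1 < π k then π * Equiv.swap k k1
      else if m.val k k = 0 then π * Equiv.swap k k1 else π := by
  symm
  rw [← dc_iff, mul_assoc]
  refine dc_lower_mul ?_ hl
  have hne : k1 ≠ k := by intro h; simp [Fin.ext_iff] at h; omega
  split_ifs with h1 h2
  · exact dc_desc hk π h1 hm
  · exact dc_zero hk π hm h2
  · refine dc_asc_ne hk π ?_ hm h2
    exact lt_of_le_of_ne (not_lt.mp h1) (fun h => hne (π.injective h).symm)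

lemma sum_nonzero (v : K) : (∑ t : F, if t ≠ 0 then v else 0) = ((Fintype.card F : K) - 1) * v := by
  have : (∑ t : F, if t ≠ 0 then v else 0) = ∑ t : F, (v - if t = 0 then v else 0) := by
    refine Finset.sum_congr rfl fun t _ => ?_
    by_cases ht : t = 0 <;> simp [ht]
  rw [this, Finset.sum_sub_distrib]
  simp [sub_mul]

lemma gen_core {k0 k1 : Fin n} (hk : k1.val = k0.val + 1) (hne : k1 ≠ k0) {l b : GLn F n}
    (π σ : Equiv.Perm (Fin n)) (hl : lowerTri (l : Matrix (Fin n) (Fin n) F))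
    (hb : upperTri (b : Matrix (Fin n) (Fin n) F)) :
    ((if σ = wp (l * permGL F n π * b * permGL F n (Equiv.swap k0 k1)) then (1 : K) else 0)
      + ∑ t : F, if t ≠ 0 then
        (if σ = wp (l * permGL F n π * b * transvGL F n k1 k0 hne t)
          then (1 : K) else 0) else 0) =
    if π k1 < π k0 then
      (if σ = π * Equiv.swap k0 k1 then (Fintype.card F : K) else 0)
    else
      (if σ = π * Equiv.swap k0 k1 then 1 else 0)
        + (if σ = π then (Fintype.card F : K) - 1 else 0) := by
  have ha : b.val k0 k0 ≠ 0 := upper_diag hb k0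
  have e1 : (b * permGL F n (Equiv.swap k0 k1)).val k0 k0 = b.val k0 k1 := by
    have := mul_permMat_apply (Equiv.swap k0 k1) b.val k0 k0
    rwa [Equiv.swap_apply_left] at this
  have e2 : ∀ t, (b * transvGL F n k1 k0 hne t).val k0 k0 = b.val k0 k0 + t * b.val k0 k1 :=
    fun t => Matrix.mul_transvection_apply_same _ _ _ _ _
  have hs : wp (l * permGL F n π * b * permGL F n (Equiv.swap k0 k1)) =
      if π k1 < π k0 then π * Equiv.swap k0 k1
      else if b.val k0 k1 = 0 then π * Equiv.swap k0 k1 else π := by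
    rw [mul_assoc (l * permGL F n π), wp_Zp hk π hl (Zp_upper_swap hk hb), e1]
  have hf : ∀ t, t ≠ 0 → wp (l * permGL F n π * b * transvGL F n k1 k0 hne t) =
      if π k1 < π k0 then π * Equiv.swap k0 k1
      else if b.val k0 k0 + t * b.val k0 k1 = 0 then π * Equiv.swap k0 k1 else π := by
    intro t ht
    rw [mul_assoc (l * permGL F n π), wp_Zp hk π hl (Zp_upper_transv hk hne hb ht), e2]
  rw [hs]
  have hf' : (∑ t : F, if t ≠ 0 then
        (if σ = wp (l * permGL F n π * b * transvGL F n k1 k0 hne t)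
          then (1 : K) else 0) else 0) =
      ∑ t : F, if t ≠ 0 then
        (if σ = (if π k1 < π k0 then π * Equiv.swap k0 k1
      else if b.val k0 k0 + t * b.val k0 k1 = 0 then π * Equiv.swap k0 k1 else π)
          then (1 : K) else 0) else 0 := by
    refine Finset.sum_congr rfl fun t _ => ?_
    by_cases ht : t = 0
    · simp [ht]
    · rw [hf t ht]
  rw [hf']
  by_cases hd : π k1 < π k0
  · simp only [hd, if_true]
    rw [sum_nonzero]
    split_ifs <;> ring
  · simp only [hd, if_false]
    by_cases hc : b.val k0 k1 = 0
    · simp only [hc, mul_zero, add_zero, ha, if_true, if_false]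
      rw [sum_nonzero]
      split_ifs <;> ring
    · simp only [hc, if_false]
      have hsum : (∑ t : F, if t ≠ 0 then
          (if σ = (if b.val k0 k0 + t * b.val k0 k1 = 0 then π * Equiv.swap k0 k1 else π)
            then (1 : K) else 0) else 0) =
          ∑ t : F, ((if t ≠ 0 then (if σ = π then (1 : K) else 0) else 0) +
            if t = - (b.val k0 k0 / b.val k0 k1) then
              ((if σ = π * Equiv.swap k0 k1 then (1 : K) else 0) -
                if σ = π then (1 : K) else 0) else 0) := by
        refine Finset.sum_congr rfl fun t _ => ?_
        have hiff : b.val k0 k0 + t * b.val k0 k1 = 0 ↔ t = - (b.val k0 k0 / b.val k0 k1) := by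
          rw [← neg_div, eq_div_iff hc]
          constructor <;> intro h <;> linear_combination h
        have hn0 : - (b.val k0 k0 / b.val k0 k1) ≠ 0 := neg_ne_zero.2 (div_ne_zero ha hc)
        by_cases ht : t = - (b.val k0 k0 / b.val k0 k1)
        · have ht0 : t ≠ 0 := ht ▸ hn0
          rw [if_pos ht0, if_pos (hiff.2 ht), if_pos ht, if_pos ht0]; ring
        · rw [if_neg (fun h => ht (hiff.1 h)), if_neg ht, add_zero]
      rw [hsum, Finset.sum_add_distrib, sum_nonzero, Finset.sum_ite_eq']
      simp only [Finset.mem_univ, if_true]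
      split_ifs <;> ring

lemma gen_proj (k : ℕ) :
    genGB F n K k * projMat F n K = projMat F n K * genMatP n (Fintype.card F : K) k := by
  ext C σ
  have hR : (projMat F n K * genMatP n (Fintype.card F : K) k) C σ
      = genMatP n (Fintype.card F : K) k (wc C) σ := by
    rw [Matrix.mul_apply]
    simp [projMat_apply]
  rw [hR]
  by_cases h : k + 1 < n
  swap
  · rw [Matrix.mul_apply]
    simp [genGB, genMatP, h]
  rw [gen_mul_proj_apply K k h]
  have hdc : dc (wc C) C.out := (dc_iff _ _).2 rfl
  generalize wc C = π at *
  obtain ⟨l, b, hl, hb, hg⟩ := hdc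
  rw [hg]
  simp only [genMatP, dif_pos h]
  exact gen_core K rfl _ π σ hl hb

lemma genGB_apply (k : ℕ) (h : k + 1 < n) (C D : Cosets F n) :
    genGB F n K k C D = if Zp ⟨k, Nat.lt_of_succ_lt h⟩ ⟨k + 1, h⟩ (C.out⁻¹ * D.out : GLn F n).val
      then 1 else 0 := by
  have hk : (⟨k + 1, h⟩ : Fin n).val = (⟨k, Nat.lt_of_succ_lt h⟩ : Fin n).val + 1 := rfl
  have hne : (⟨k + 1, h⟩ : Fin n) ≠ ⟨k, Nat.lt_of_succ_lt h⟩ :=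
    fun hc => by simp [Fin.ext_iff] at hc
  have hmk : ∀ p : GLn F n, (QuotientGroup.mk (C.out * p) : Cosets F n) = D ↔
      upperTri (p⁻¹ * (C.out⁻¹ * D.out) : GLn F n).val := by
    intro p
    conv_lhs => rw [← QuotientGroup.out_eq' D]
    rw [QuotientGroup.eq, mul_inv_rev, mul_assoc]
    rfl
  simp only [genGB, dif_pos h, hmk, permGL_inv, transvGL_inv, Equiv.swap_inv]
  generalize (C.out⁻¹ * D.out : GLn F n) = m
  by_cases hm : Zp ⟨k, Nat.lt_of_succ_lt h⟩ ⟨k + 1, h⟩ m.val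
  · rw [if_pos hm]
    simp only [swap_mul_upper_iff hk hm, transv_mul_upper_iff hk hne hm]
    have he := hm.2
    by_cases h0 : m.val ⟨k, Nat.lt_of_succ_lt h⟩ ⟨k, Nat.lt_of_succ_lt h⟩ = 0
    · simp [h0, he]
    · rw [if_neg h0, zero_add]
      have : (Finset.univ.filter fun t : F => t ≠ 0 ∧
          m.val ⟨k + 1, h⟩ ⟨k, Nat.lt_of_succ_lt h⟩ +
            -t * m.val ⟨k, Nat.lt_of_succ_lt h⟩ ⟨k, Nat.lt_of_succ_lt h⟩ = 0) =
          {m.val ⟨k + 1, h⟩ ⟨k, Nat.lt_of_succ_lt h⟩ /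
            m.val ⟨k, Nat.lt_of_succ_lt h⟩ ⟨k, Nat.lt_of_succ_lt h⟩} := by
        ext t
        simp only [Finset.mem_filter, Finset.mem_univ, true_and, Finset.mem_singleton]
        rw [eq_div_iff h0]
        constructor
        · rintro ⟨_, h2⟩
          linear_combination -h2
        · intro h2
          refine ⟨?_, by linear_combination -h2⟩
          rintro rfl
          rw [zero_mul] at h2
          exact he h2.symm
      rw [this]; simp
  · rw [if_neg hm, if_neg, zero_add]
    · rw [Finset.filter_eq_empty_iff.2]
      · simp
      · rintro t _ ⟨ht, hu⟩
        apply hm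
        have := Zp_transv_upper hk hne hu ht
        rwa [← transvGL_inv, mul_inv_cancel_left] at this
    · intro hu
      apply hm
      have := Zp_swap_upper hk hu
      rwa [← mul_assoc, swap_sq, one_mul] at this

lemma Zp_inv {k k1 : Fin n} (hk : k1.val = k.val + 1) {m : GLn F n}
    (hm : Zp k k1 m.val) : Zp k k1 (m⁻¹ : GLn F n).val := by
  have hne : k1 ≠ k := by intro h; simp [Fin.ext_iff] at h; omega
  by_cases h0 : m.val k k = 0
  · have h1 := Zp_upper_swap hk (upper_inv ((swap_mul_upper_iff hk hm).2 h0))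
    rwa [mul_inv_rev, permGL_inv, Equiv.swap_inv, mul_assoc, swap_sq, mul_one] at h1
  · have h1 := (transv_mul_upper_iff hk hne hm (-(m.val k1 k / m.val k k))).2 (by field_simp; ring)
    have h2 := Zp_upper_transv hk hne (upper_inv h1)
      (t := -(m.val k1 k / m.val k k)) (neg_ne_zero.2 (div_ne_zero hm.2 h0))
    rwa [mul_inv_rev, inv_mul_cancel_right] at h2

lemma genGB_symm (k : ℕ) (C D : Cosets F n) : genGB F n K k C D = genGB F n K k D C := by
  by_cases h : k + 1 < n
  · rw [genGB_apply K k h, genGB_apply K k h]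
    congr 1
    rw [eq_iff_iff]
    constructor
    · intro hz
      have := Zp_inv rfl hz
      rwa [mul_inv_rev, inv_inv] at this
    · intro hz
      have := Zp_inv rfl hz
      rwa [mul_inv_rev, inv_inv] at this
  · simp [genGB, h]

lemma invCount_desc {k k1 : Fin n} (hk : k1.val = k.val + 1) (π : Equiv.Perm (Fin n))
    (hπ : π k1 < π k) : invCount π = invCount (π * Equiv.swap k k1) + 1 := by
  have hlt : k < k1 := by simp only [Fin.lt_def]; omega
  have hset : (Finset.univ.filter fun p : Fin n × Fin n => p.1 < p.2 ∧ π p.2 < π p.1) =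
      insert (k, k1) ((Finset.univ.filter fun p : Fin n × Fin n => p.1 < p.2 ∧
        (π * Equiv.swap k k1) p.2 < (π * Equiv.swap k k1) p.1).map
          ((Equiv.prodCongr (Equiv.swap k k1) (Equiv.swap k k1)).toEmbedding)) := by
    ext ⟨a, b⟩
    simp only [Finset.mem_filter, Finset.mem_univ, true_and, Finset.mem_insert,
      Finset.mem_map_equiv, Prod.mk.injEq, Equiv.prodCongr_symm, Equiv.symm_swap,
      Equiv.prodCongr_apply, Prod.map]
    simp only [Equiv.Perm.mul_apply, Equiv.swap_apply_self]
    constructor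
    · rintro ⟨h1, h2⟩
      by_cases h : a = k ∧ b = k1
      · exact Or.inl h
      · exact Or.inr ⟨swap_lt hk h1 (fun hh => h hh.symm), h2⟩
    · rintro (⟨rfl, rfl⟩ | ⟨h1, h2⟩)
      · exact ⟨hlt, hπ⟩
      · refine ⟨?_, h2⟩
        have h3 := swap_lt hk h1 ?_
        · simpa using h3
        · rintro ⟨h4, h5⟩
          have h4' : b = k := by simpa using congrArg (Equiv.swap k k1) h4
          have h5' : a = k1 := by simpa using congrArg (Equiv.swap k k1) h5
          subst h4'; subst h5'
          exact absurd h2 hπ.not_gt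
  unfold invCount
  rw [hset, Finset.card_insert_of_notMem, Finset.card_map]
  simp only [Finset.mem_filter, Finset.mem_univ, true_and,
      Finset.mem_map_equiv, Equiv.prodCongr_symm, Equiv.symm_swap,
      Equiv.prodCongr_apply, Prod.map, Equiv.swap_apply_left, Equiv.swap_apply_right]
  exact fun h => absurd h.1 hlt.not_gt

lemma genMatP_balance (q : K) (k : ℕ) (π σ : Equiv.Perm (Fin n)) :
    genMatP n q k π σ * q ^ invCount σ = q ^ invCount π * genMatP n q k σ π := by
  by_cases h : k + 1 < n
  swap
  · simp [genMatP, h]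
  simp only [genMatP, dif_pos h]
  have hk : (⟨k + 1, h⟩ : Fin n).val = (⟨k, Nat.lt_of_succ_lt h⟩ : Fin n).val + 1 := rfl
  generalize (⟨k + 1, h⟩ : Fin n) = k1 at *
  generalize (⟨k, Nat.lt_of_succ_lt h⟩ : Fin n) = k0 at *
  have hne : k1 ≠ k0 := by intro h; simp [Fin.ext_iff] at h; omega
  by_cases hσ : σ = π * Equiv.swap k0 k1
  · have hπ : π = σ * Equiv.swap k0 k1 := by rw [hσ, mul_assoc, Equiv.swap_mul_self, mul_one]
    have hn : σ ≠ π := by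
      intro h
      rw [h] at hσ
      have := congrFun (congrArg DFunLike.coe hσ) k0
      simp only [Equiv.Perm.mul_apply, Equiv.swap_apply_left] at this
      exact hne (π.injective this).symm
    have v1 : σ k1 = π k0 := by rw [hσ]; simp
    have v0 : σ k0 = π k1 := by rw [hσ]; simp
    rw [if_pos hσ, if_pos hσ, if_pos hπ, if_pos hπ, if_neg hn, if_neg hn.symm, v1, v0]
    rcases lt_or_gt_of_ne (fun h => hne (π.injective h)) with hd | hd
    · rw [if_pos hd, if_neg hd.not_gt]
      have := invCount_desc hk π hd
      rw [← hσ] at this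
      rw [this]; ring
    · rw [if_pos hd, if_neg hd.not_gt]
      have := invCount_desc hk σ (by rw [v1, v0]; exact hd)
      rw [← hπ] at this
      rw [this]; ring
  · have hπ : ¬ π = σ * Equiv.swap k0 k1 := by
      intro h
      apply hσ
      rw [h, mul_assoc, Equiv.swap_mul_self, mul_one]
    simp only [if_neg hσ, if_neg hπ]
    by_cases he : σ = π
    · subst he
      split_ifs <;> ring
    · simp [he, Ne.symm he]

lemma gen_incl (k : ℕ) :
    genMatP n (Fintype.card F : K) k * inclMat F n K = inclMat F n K * genGB F n K k := by
  ext π D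
  have hL : (genMatP n (Fintype.card F : K) k * inclMat F n K) π D
      = genMatP n (Fintype.card F : K) k π (wc D) * (Fintype.card F : K) ^ invCount (wc D) := by
    rw [Matrix.mul_apply]
    simp [inclMat_apply]
  have hR : (inclMat F n K * genGB F n K k) π D
      = (Fintype.card F : K) ^ invCount π * (genGB F n K k * projMat F n K) D π := by
    rw [Matrix.mul_apply, Matrix.mul_apply, Finset.mul_sum]
    refine Finset.sum_congr rfl fun C _ => ?_
    rw [inclMat_apply, projMat_apply, genGB_symm]
    split_ifs <;> ring
  have hP : (projMat F n K * genMatP n (Fintype.card F : K) k) D π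
      = genMatP n (Fintype.card F : K) k (wc D) π := by
    rw [Matrix.mul_apply]
    simp [projMat_apply]
  rw [hL, hR, gen_proj, hP, genMatP_balance]

lemma prod_proj (k : ℕ) :
    prodGenGB F n K k * projMat F n K = projMat F n K * prodGenP n (Fintype.card F : K) k := by
  induction k with
  | zero => simp [prodGenGB, prodGenP]
  | succ k ih =>
    rw [prodGenGB, prodGenP, Matrix.mul_assoc, ih, ← Matrix.mul_assoc, gen_proj, Matrix.mul_assoc]

lemma prod_incl (k : ℕ) :
    prodGenP n (Fintype.card F : K) k * inclMat F n K = inclMat F n K * prodGenGB F n K k := by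
  induction k with
  | zero => simp [prodGenGB, prodGenP]
  | succ k ih =>
    rw [prodGenGB, prodGenP, Matrix.mul_assoc, ih, ← Matrix.mul_assoc, gen_incl, Matrix.mul_assoc]

lemma pivotRow_eq (h : 0 < n) (C : Cosets F n) : pivotRow F n C = (wc C ⟨0, h⟩ : ℕ) := by
  have hdc : dc (wc C) C.out := (dc_iff _ _).2 rfl
  obtain ⟨l, b, hl, hb, hg⟩ := hdc
  have e : ∀ i : Fin n, (C.out : GLn F n).val i ⟨0, h⟩ =
      l.val i (wc C ⟨0, h⟩) * b.val ⟨0, h⟩ ⟨0, h⟩ := by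
    intro i
    rw [hg]
    show ((l.val * permMat F n (wc C)) * b.val) i ⟨0, h⟩ = _
    rw [Matrix.mul_apply, Finset.sum_eq_single ⟨0, h⟩, mul_permMat_apply]
    · intro j _ hj
      rw [hb j ⟨0, h⟩, mul_zero]
      have : j.val ≠ 0 := fun h' => hj (Fin.ext h')
      simp only [Fin.lt_def]; omega
    · simp
  unfold pivotRow
  apply le_antisymm
  · apply Nat.sInf_le
    refine ⟨(wc C ⟨0, h⟩).isLt, ?_⟩
    have := e (wc C ⟨0, h⟩)
    refine fun h0 => ?_
    exact mul_ne_zero (lower_diag hl _) (upper_diag hb _) (this.symm.trans h0)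
  · apply le_csInf
    · refine ⟨(wc C ⟨0, h⟩).val, (wc C ⟨0, h⟩).isLt, ?_⟩
      have := e (wc C ⟨0, h⟩)
      refine fun h0 => ?_
      exact mul_ne_zero (lower_diag hl _) (upper_diag hb _) (this.symm.trans h0)
    · rintro i ⟨hi, hne⟩
      by_contra hlt
      apply hne
      have := e ⟨i, hi⟩
      refine this.trans ?_
      rw [hl ⟨i, hi⟩ _ (by simp only [Fin.lt_def]; omega), zero_mul]

lemma XGB_apply (x : Fin n → K) (C D : Cosets F n) :
    XGB F n K x C D = if D = C then
      (if h : 0 < n then x (wc C ⟨0, h⟩) / (Fintype.card F : K) ^ (n - 1 - (wc C ⟨0, h⟩ : ℕ)) else 0)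
      else 0 := by
  unfold XGB
  congr 1
  by_cases h : 0 < n
  · have hp := pivotRow_eq h C
    have hlt : pivotRow F n C < n := hp ▸ (wc C ⟨0, h⟩).isLt
    rw [dif_pos hlt, dif_pos h]
    have : (⟨pivotRow F n C, hlt⟩ : Fin n) = wc C ⟨0, h⟩ := Fin.ext hp
    rw [this, hp]
  · rw [dif_neg (by omega), dif_neg h]

lemma X_proj (x : Fin n → K) :
    XGB F n K x * projMat F n K = projMat F n K * XSnP n (Fintype.card F : K) x := by
  ext C σ
  rw [Matrix.mul_apply, Matrix.mul_apply]
  simp only [XGB_apply, projMat_apply, XSnP, ite_mul, zero_mul, one_mul, Finset.sum_ite_eq',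
    Finset.mem_univ, if_true]
  split_ifs <;> simp

lemma X_incl (x : Fin n → K) :
    XSnP n (Fintype.card F : K) x * inclMat F n K = inclMat F n K * XGB F n K x := by
  ext π D
  rw [Matrix.mul_apply, Matrix.mul_apply, Finset.sum_eq_single π, Finset.sum_eq_single D]
  · simp only [XGB_apply, inclMat_apply, XSnP, if_true]
    by_cases h : π = wc D
    · subst h; simp [mul_comm]
    · simp [h]
  · intro C _ hC
    simp [XGB_apply, hC.symm]
  · simp
  · intro σ _ hσ
    simp [XSnP, hσ]
  · simp

end helpers

/-- Let `q` be a prime power (the cardinality of the finite field `F`) and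
`x` arbitrary complex weights.  The projection and inclusion maps intertwine the q-Tsetlin
library operators on `ℂ[G/B]` and `ℂS_n` (in row-vector convention, composition of right
operators is matrix multiplication, so these matrix identities say exactly
`proj(gB · T_{G/B}(q,x)) = proj(gB) · T_{S_n}(q,x)` for every coset `gB`, and
`incl(π · T_{S_n}(q,x)) = incl(π) · T_{G/B}(q,x)` for every permutation `π`). -/
theorem qTsetlin_proj_incl_intertwine (F : Type) [Field F] [Fintype F] [DecidableEq F]
    (n : ℕ) (x : Fin n → ℂ) :
    TGB F n ℂ x * projMat F n ℂ =
      projMat F n ℂ * TSnP n (Fintype.card F : ℂ) x ∧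
    TSnP n (Fintype.card F : ℂ) x * inclMat F n ℂ =
      inclMat F n ℂ * TGB F n ℂ x := by
  constructor
  · rw [TGB, TSnP, Matrix.mul_assoc, X_proj, ← Matrix.mul_assoc, ← Matrix.mul_assoc,
      Matrix.sum_mul, Matrix.mul_sum]
    congr 1
    exact Finset.sum_congr rfl fun k _ => prod_proj ℂ k
  · rw [TGB, TSnP, Matrix.mul_assoc, X_incl, ← Matrix.mul_assoc, ← Matrix.mul_assoc,
      Matrix.sum_mul, Matrix.mul_sum]
    congr 1
    exact Finset.sum_congr rfl fun k _ => prod_incl ℂ k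

end QTsetlin
end
end

section
/- Let q be a prime power, m a composition of n with all m_j ≥ 1, x = (x_1,…,x_n) m-compatible weights, and x̄_j = [m_j]_q·x_{n_j}. Let Λ_{G/B}, Λ_{S_n}, Λ_{W_m} denote the sets of eigenvalues (over ℂ) of the transition matrices of T_{G/B}(q,x), T_{S_n}(q,x) and T_{W_m}(q,x̄), respectively. Then Λ_{W_m} ⊆ Λ_{S_n} ⊆ Λ_{G/B}. Moreover, if T_{G/B}(q,x) is diagonalizable, then so are T_{S_n}(q,x) and T_{W_m}(q,x̄). -/
open scoped Classical
set_option linter.unusedSectionVars false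
set_option synthInstance.maxHeartbeats 1000000
set_option maxHeartbeats 1000000

noncomputable section

namespace QTsetlin

variable (F : Type) [Field F] [Fintype F] [DecidableEq F] (n : ℕ)

variable (K : Type) [Field K]

/-- Number of coinversions `#{(i,j) : i < j, π_i < π_j}` of a permutation. -/
def coinvCount {m : ℕ} (π : Equiv.Perm (Fin m)) : ℕ :=
  (Finset.univ.filter fun p : Fin m × Fin m => p.1 < p.2 ∧ π p.1 < π p.2).card

/-- The q-integer `[a]_q = 1 + q + ⋯ + q^{a-1}`. -/
def qInt {R : Type} [Field R] (q : R) (a : ℕ) : R := ∑ r ∈ Finset.range a, q ^ r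

/-- `n_j = m_1 + ⋯ + m_j` (the first `j` parts of the composition, `j : ℕ`). -/
def nsum (l : ℕ) (m : Fin l → ℕ) (j : ℕ) : ℕ :=
  ∑ t ∈ Finset.univ.filter fun t : Fin l => (t : ℕ) < j, m t

/-- The (0-based) index `j` of the block `M_{j+1} = {n_j + 1, …, n_{j+1}}` containing the
0-based value `v` (paper value `v+1`). -/
def blockOf (l : ℕ) (m : Fin l → ℕ) (v : ℕ) : ℕ :=
  sInf {j : ℕ | v < nsum l m (j + 1)}

/-- Words of length `nn` in the alphabet `{1,…,l}` with `m j` occurrences of letter `j`. -/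
abbrev Words (nn l : ℕ) (m : Fin l → ℕ) : Type :=
  {w : Fin nn → Fin l // ∀ j, (Finset.univ.filter fun i => w i = j).card = m j}

/-- Matrix (row convention) of the Hecke generator `T_{k+1}` (paper indexing) on words. -/
def genMatW (nn l : ℕ) (m : Fin l → ℕ) {R : Type} [Field R] (q : R) (k : ℕ) :
    Matrix (Words nn l m) (Words nn l m) R := fun w u =>
  if h : k + 1 < nn then
    if w.1 ⟨k + 1, h⟩ ≤ w.1 ⟨k, Nat.lt_of_succ_lt h⟩ then
      (if u.1 = w.1 ∘ Equiv.swap ⟨k, Nat.lt_of_succ_lt h⟩ ⟨k + 1, h⟩ then q else 0)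
    else
      (if u.1 = w.1 ∘ Equiv.swap ⟨k, Nat.lt_of_succ_lt h⟩ ⟨k + 1, h⟩ then 1 else 0)
        + (if u = w then q - 1 else 0)
  else 0

/-- Matrix of the product `T_k T_{k-1} ⋯ T_1` on words. -/
def prodGenW (nn l : ℕ) (m : Fin l → ℕ) {R : Type} [Field R] (q : R) :
    ℕ → Matrix (Words nn l m) (Words nn l m) R
  | 0 => 1
  | k + 1 => genMatW nn l m q k * prodGenW nn l m q k

/-- Matrix of the weighting operator `X_{W_m}(q,x̄)`. -/
def XW (nn l : ℕ) (m : Fin l → ℕ) {R : Type} [Field R] (q : R) (xb : Fin l → R) :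
    Matrix (Words nn l m) (Words nn l m) R := fun w u =>
  if u = w then
    (if h : 0 < nn then
      xb (w.1 ⟨0, h⟩) /
        (q ^ (∑ t ∈ Finset.univ.filter fun t : Fin l => w.1 ⟨0, h⟩ < t, m t)
          * qInt q (m (w.1 ⟨0, h⟩)))
    else 0)
  else 0

/-- Matrix of the q-Tsetlin library operator `T_{W_m}(q,x̄)` (row convention). -/
def TWm (nn l : ℕ) (m : Fin l → ℕ) {R : Type} [Field R] (q : R) (xb : Fin l → R) :
    Matrix (Words nn l m) (Words nn l m) R :=
  (∑ k ∈ Finset.range nn, prodGenW nn l m q k) * XW nn l m q xb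

/-- The weights `x` are `m`-compatible: `y_i = x_i / q^{n-i}` is constant on blocks. -/
def mCompatible (nn l : ℕ) (m : Fin l → ℕ) {R : Type} [Field R] (q : R) (x : Fin nn → R) :
    Prop :=
  ∀ i i' : Fin nn, blockOf l m (i : ℕ) = blockOf l m (i' : ℕ) →
    x i / q ^ (nn - 1 - (i : ℕ)) = x i' / q ^ (nn - 1 - (i' : ℕ))

/-- The set of eigenvalues (over `ℂ`) of a square matrix. -/
def eigSet {P : Type} [Fintype P] [DecidableEq P] (M : Matrix P P ℂ) : Set ℂ :=
  {μ : ℂ | ∃ v : P → ℂ, v ≠ 0 ∧ M.mulVec v = μ • v}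

/-- `M` is diagonalizable: conjugate to a diagonal matrix. -/
def IsDiagonalizable {P : Type} [Fintype P] [DecidableEq P] (M : Matrix P P ℂ) : Prop :=
  ∃ Pm D : Matrix P P ℂ, IsUnit Pm.det ∧ D.IsDiag ∧ M = Pm * D * Pm⁻¹


theorem diag_of_lump {P Q : Type} [Fintype P] [DecidableEq P] [Fintype Q] [DecidableEq Q]
    (A : Matrix P P ℂ) (A' : Matrix Q Q ℂ) (φ : P → Q) (hφ : Function.Surjective φ)
    (h : ∀ v : Q → ℂ, A.mulVec (v ∘ φ) = (A'.mulVec v) ∘ φ)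
    (hA : IsDiagonalizable A) : IsDiagonalizable A' := by
  obtain ⟨R, D, hR, hD, hAR⟩ := hA
  -- the left eigenvectors of `A` pushed forward
  let Φ : Matrix P Q ℂ := fun p r => if φ p = r then 1 else 0
  have hΦv : ∀ v : Q → ℂ, Φ.mulVec v = v ∘ φ := by
    intro v; ext p; simp [Φ, Matrix.mulVec, dotProduct]
  have hAΦ : A * Φ = Φ * A' := by
    apply Matrix.ext_of_mulVec_single
    intro i
    rw [← Matrix.mulVec_mulVec, ← Matrix.mulVec_mulVec, hΦv, h, hΦv]
  let U : Matrix P Q ℂ := R⁻¹ * Φ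
  have hU : U * A' = D * U := by
    have h1 : R⁻¹ * A = D * R⁻¹ := by
      rw [hAR, ← Matrix.mul_assoc, ← Matrix.mul_assoc, Matrix.nonsing_inv_mul _ hR, Matrix.one_mul]
    simp only [U]
    rw [Matrix.mul_assoc, ← hAΦ, ← Matrix.mul_assoc, h1, Matrix.mul_assoc]
  have hinj : ∀ v : Q → ℂ, U.mulVec v = 0 → v = 0 := by
    intro v hv
    have h2 : R.mulVec (U.mulVec v) = v ∘ φ := by
      rw [Matrix.mulVec_mulVec]
      simp only [U]
      rw [← Matrix.mul_assoc, Matrix.mul_nonsing_inv _ hR, Matrix.one_mul, hΦv]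
    rw [hv, Matrix.mulVec_zero] at h2
    ext r
    obtain ⟨p, rfl⟩ := hφ r
    exact (congrFun h2 p).symm
  have hspan : Submodule.span ℂ (Set.range U.row) = ⊤ := by
    have hc : LinearIndependent ℂ U.col := by
      rw [← Matrix.mulVec_injective_iff]
      intro v w hvw
      have := hinj (v - w) (by rw [Matrix.mulVec_sub]; exact sub_eq_zero.mpr hvw)
      exact sub_eq_zero.mp this
    have h4 : U.rank = Fintype.card Q := by
      rw [← Matrix.rank_transpose]; exact hc.rank_matrix
    rw [Matrix.rank_eq_finrank_span_row] at h4
    apply Submodule.eq_top_of_finrank_eq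
    rw [h4]; simp
  obtain ⟨κ, a, ha, hsp, hli⟩ := exists_linearIndependent' ℂ U.row
  rw [hspan] at hsp
  let b : Module.Basis κ ℂ (Q → ℂ) := Module.Basis.mk hli (by rw [hsp])
  let e : κ ≃ Q := b.indexEquiv (Pi.basisFun ℂ Q)
  let S : Matrix Q Q ℂ := fun r => U.row (a (e.symm r))
  have hS : S * A' = Matrix.diagonal (fun r => D (a (e.symm r)) (a (e.symm r))) * S := by
    ext r s
    have := congrFun (congrFun hU (a (e.symm r))) s
    rw [Matrix.diagonal_mul]
    rw [Matrix.mul_apply] at this ⊢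
    rw [Matrix.mul_apply, Finset.sum_eq_single (a (e.symm r))] at this
    · exact this
    · intro p _ hp
      rw [hD hp.symm, zero_mul]
    · simp
  have hSu : IsUnit S := by
    rw [← Matrix.linearIndependent_rows_iff_isUnit]
    exact hli.comp _ e.symm.injective
  have hSd := (Matrix.isUnit_iff_isUnit_det _).mp hSu
  refine ⟨S⁻¹, Matrix.diagonal (fun r => D (a (e.symm r)) (a (e.symm r))), ?_, ?_, ?_⟩
  · exact Matrix.isUnit_nonsing_inv_det _ hSd
  · exact Matrix.isDiag_diagonal _
  · rw [Matrix.nonsing_inv_nonsing_inv _ hSd, Matrix.mul_assoc, ← hS, ← Matrix.mul_assoc,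
      Matrix.nonsing_inv_mul _ hSd, Matrix.one_mul]

theorem eig_of_lump {P Q : Type} [Fintype P] [DecidableEq P] [Fintype Q] [DecidableEq Q]
    (A : Matrix P P ℂ) (A' : Matrix Q Q ℂ) (φ : P → Q) (hφ : Function.Surjective φ)
    (h : ∀ v : Q → ℂ, A.mulVec (v ∘ φ) = (A'.mulVec v) ∘ φ) : eigSet A' ⊆ eigSet A := by
  rintro μ ⟨v, hv, he⟩
  refine ⟨v ∘ φ, ?_, ?_⟩
  · intro h0
    apply hv
    ext r
    obtain ⟨p, rfl⟩ := hφ r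
    exact congrFun h0 p
  · rw [h, he]; rfl

/-! ### permutations to words -/

lemma nsum_succ (l : ℕ) (m : Fin l → ℕ) (j : Fin l) :
    nsum l m ((j : ℕ) + 1) = nsum l m j + m j := by
  unfold nsum
  have : (Finset.univ.filter fun t : Fin l => (t : ℕ) < (j : ℕ) + 1)
      = insert j (Finset.univ.filter fun t : Fin l => (t : ℕ) < (j : ℕ)) := by
    ext t; simp [Fin.ext_iff]; omega
  rw [this, Finset.sum_insert (by simp), add_comm]

lemma nsum_mono (l : ℕ) (m : Fin l → ℕ) : Monotone (nsum l m) := by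
  intro a b hab
  apply Finset.sum_le_sum_of_subset
  intro t; simp; omega

lemma nsum_top (l : ℕ) (m : Fin l → ℕ) : nsum l m l = ∑ j, m j := by
  unfold nsum
  rw [Finset.filter_true_of_mem]; simp

lemma block_iff (l : ℕ) (m : Fin l → ℕ) (v j : ℕ) (hv : v < nsum l m l) :
    blockOf l m v = j ↔ nsum l m j ≤ v ∧ v < nsum l m (j + 1) := by
  have hne : {j : ℕ | v < nsum l m (j + 1)}.Nonempty :=
    ⟨l, lt_of_lt_of_le hv (nsum_mono l m (Nat.le_succ l))⟩
  constructor
  · rintro rfl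
    refine ⟨?_, Nat.sInf_mem hne⟩
    by_contra hc
    push Not at hc
    rcases hb : blockOf l m v with _ | k
    · rw [hb] at hc; simp [nsum] at hc
    · rw [hb] at hc
      have : blockOf l m v ≤ k := Nat.sInf_le hc
      omega
  · rintro ⟨h1, h2⟩
    apply le_antisymm
    · exact Nat.sInf_le h2
    · by_contra hc
      push Not at hc
      have h3 : v < nsum l m (blockOf l m v + 1) := Nat.sInf_mem hne
      have := nsum_mono l m (show blockOf l m v + 1 ≤ j from hc)
      omega

lemma block_lt (l : ℕ) (m : Fin l → ℕ) (v : ℕ) (hv : v < nsum l m l) : blockOf l m v < l := by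
  have := (block_iff l m v _ hv).mp rfl
  by_contra hc
  push Not at hc
  have := nsum_mono l m hc
  omega

/-- the block of a value, as a letter -/
def blk (n l : ℕ) (m : Fin l → ℕ) (hmn : ∑ j, m j = n) (v : Fin n) : Fin l :=
  ⟨blockOf l m v, block_lt l m v (by rw [nsum_top, hmn]; exact v.2)⟩

lemma blk_mono (n l : ℕ) (m : Fin l → ℕ) (hmn : ∑ j, m j = n) : Monotone (blk n l m hmn) := by
  intro a b hab
  have hl : nsum l m l = n := by rw [nsum_top, hmn]
  have h1 := (block_iff l m a _ (by rw [hl]; exact a.2)).mp rfl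
  have h2 := (block_iff l m b _ (by rw [hl]; exact b.2)).mp rfl
  show blockOf l m a ≤ blockOf l m b
  by_contra hc
  push Not at hc
  have := nsum_mono l m (show blockOf l m b + 1 ≤ blockOf l m a from hc)
  have : (a : ℕ) ≤ b := hab
  omega

lemma blk_card (n l : ℕ) (m : Fin l → ℕ) (hmn : ∑ j, m j = n) (j : Fin l) :
    (Finset.univ.filter fun i => blk n l m hmn i = j).card = m j := by
  have hl : nsum l m l = n := by rw [nsum_top, hmn]
  have : (Finset.univ.filter fun i => blk n l m hmn i = j).map Fin.valEmbedding
      = Finset.Ico (nsum l m j) (nsum l m (j + 1)) := by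
    ext v
    simp only [Finset.mem_map, Finset.mem_filter, Finset.mem_univ, true_and, Finset.mem_Ico,
      Fin.valEmbedding_apply]
    constructor
    · rintro ⟨a, ha, rfl⟩
      exact (block_iff l m a _ (by rw [hl]; exact a.2)).mp (congrArg Fin.val ha)
    · intro hv
      have h3 := nsum_mono l m (show (j : ℕ) + 1 ≤ l from j.2)
      refine ⟨⟨v, by omega⟩, ?_, rfl⟩
      apply Fin.ext
      exact (block_iff l m v _ (by omega)).mpr hv
  rw [← Finset.card_map Fin.valEmbedding, this, Nat.card_Ico, nsum_succ]
  omega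

/-- the word of a permutation -/
def toWord (n l : ℕ) (m : Fin l → ℕ) (hmn : ∑ j, m j = n) (π : Equiv.Perm (Fin n)) :
    Words n l m :=
  ⟨blk n l m hmn ∘ π, by
    intro j
    rw [← blk_card n l m hmn j]
    apply Finset.card_bij (fun a _ => π a)
    · intro a ha; simpa using ha
    · intro a _ b _ h; exact π.injective h
    · intro b hb; exact ⟨π.symm b, by simpa using hb, by simp⟩⟩

lemma toWord_surj (n l : ℕ) (m : Fin l → ℕ) (hmn : ∑ j, m j = n) :
    Function.Surjective (toWord n l m hmn) := by
  intro w
  have he : ∀ j, Nonempty ({i // w.1 i = j} ≃ {i // blk n l m hmn i = j}) := by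
    intro j
    apply Fintype.card_eq.mp
    rw [Fintype.card_subtype, Fintype.card_subtype, w.2 j, blk_card]
  let e : Equiv.Perm (Fin n) := Equiv.ofFiberEquiv (fun j => (he j).some)
  refine ⟨e, ?_⟩
  apply Subtype.ext
  funext i
  exact Equiv.ofFiberEquiv_map (g := blk n l m hmn) (fun j => (he j).some) i

lemma prodGen_lump {P Q : Type} [Fintype P] [DecidableEq P] [Fintype Q] [DecidableEq Q]
    (φ : P → Q) (N : ℕ) (g a : ℕ → Matrix P P ℂ) (g' a' : ℕ → Matrix Q Q ℂ)
    (X : Matrix P P ℂ) (X' : Matrix Q Q ℂ)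
    (h0 : a 0 = 1) (h0' : a' 0 = 1)
    (hs : ∀ k, a (k + 1) = g k * a k) (hs' : ∀ k, a' (k + 1) = g' k * a' k)
    (hg : ∀ k, ∀ v : Q → ℂ, (g k).mulVec (v ∘ φ) = ((g' k).mulVec v) ∘ φ)
    (hX : ∀ v : Q → ℂ, X.mulVec (v ∘ φ) = (X'.mulVec v) ∘ φ) (v : Q → ℂ) :
    ((∑ k ∈ Finset.range N, a k) * X).mulVec (v ∘ φ)
      = (((∑ k ∈ Finset.range N, a' k) * X').mulVec v) ∘ φ := by
  have ha : ∀ k, ∀ v : Q → ℂ, (a k).mulVec (v ∘ φ) = ((a' k).mulVec v) ∘ φ := by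
    intro k
    induction k with
    | zero => intro v; simp [h0, h0']
    | succ k ih => intro v; rw [hs, hs', ← Matrix.mulVec_mulVec, ← Matrix.mulVec_mulVec, ih, hg]
  rw [← Matrix.mulVec_mulVec, ← Matrix.mulVec_mulVec, hX, Matrix.sum_mulVec, Matrix.sum_mulVec]
  funext p
  simp only [Finset.sum_apply, Function.comp_apply]
  exact Finset.sum_congr rfl fun k _ => by rw [ha]; rfl

lemma genP_mulVec (n : ℕ) (q : ℂ) (k : ℕ) (h : k + 1 < n) (v : Equiv.Perm (Fin n) → ℂ)
    (π : Equiv.Perm (Fin n)) : (genMatP n q k).mulVec v π =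
    if π ⟨k + 1, h⟩ < π ⟨k, Nat.lt_of_succ_lt h⟩ then
      q * v (π * Equiv.swap ⟨k, Nat.lt_of_succ_lt h⟩ ⟨k + 1, h⟩)
    else v (π * Equiv.swap ⟨k, Nat.lt_of_succ_lt h⟩ ⟨k + 1, h⟩) + (q - 1) * v π := by
  simp only [Matrix.mulVec, dotProduct, genMatP, dif_pos h]
  split_ifs with h1
  · simp
  · simp [add_mul, Finset.sum_add_distrib]

/-- swapping two positions of a word -/
def swapW (n l : ℕ) (m : Fin l → ℕ) (w : Words n l m) (s : Equiv.Perm (Fin n)) : Words n l m :=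
  ⟨w.1 ∘ s, by
    intro j
    rw [← w.2 j]
    apply Finset.card_bij (fun a _ => s a)
    · intro a ha; simpa using ha
    · intro a _ b _ h; exact s.injective h
    · intro b hb; exact ⟨s.symm b, by simpa using hb, by simp⟩⟩

lemma genW_mulVec (n l : ℕ) (m : Fin l → ℕ) (q : ℂ) (k : ℕ) (h : k + 1 < n)
    (v : Words n l m → ℂ) (w : Words n l m) : (genMatW n l m q k).mulVec v w =
    if w.1 ⟨k + 1, h⟩ ≤ w.1 ⟨k, Nat.lt_of_succ_lt h⟩ then
      q * v (swapW n l m w (Equiv.swap ⟨k, Nat.lt_of_succ_lt h⟩ ⟨k + 1, h⟩))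
    else v (swapW n l m w (Equiv.swap ⟨k, Nat.lt_of_succ_lt h⟩ ⟨k + 1, h⟩)) + (q - 1) * v w := by
  have hu : ∀ (s : Equiv.Perm (Fin n)) (u : Words n l m),
      u.1 = w.1 ∘ s ↔ u = swapW n l m w s := by
    intro s u
    rw [Subtype.ext_iff]; rfl
  simp only [Matrix.mulVec, dotProduct, genMatW, dif_pos h, hu]
  split_ifs with h1
  · simp
  · simp [add_mul, Finset.sum_add_distrib]

lemma gen_lump_W (n l : ℕ) (m : Fin l → ℕ) (hmn : ∑ j, m j = n) (q : ℂ) (k : ℕ)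
    (v : Words n l m → ℂ) : (genMatP n q k).mulVec (v ∘ toWord n l m hmn)
      = ((genMatW n l m q k).mulVec v) ∘ toWord n l m hmn := by
  funext π
  by_cases h : k + 1 < n
  · rw [Function.comp_apply, genP_mulVec n q k h, genW_mulVec n l m q k h]
    have e1 : toWord n l m hmn (π * Equiv.swap ⟨k, Nat.lt_of_succ_lt h⟩ ⟨k + 1, h⟩)
        = swapW n l m (toWord n l m hmn π) (Equiv.swap ⟨k, Nat.lt_of_succ_lt h⟩ ⟨k + 1, h⟩) := rfl
    simp only [Function.comp_apply, e1]
    have hw : ∀ i, (toWord n l m hmn π).1 i = blk n l m hmn (π i) := fun i => rfl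
    simp only [hw]
    by_cases h1 : π ⟨k + 1, h⟩ < π ⟨k, Nat.lt_of_succ_lt h⟩
    · rw [if_pos h1, if_pos (blk_mono n l m hmn h1.le)]
    · rw [if_neg h1]
      push Not at h1
      by_cases h2 : blk n l m hmn (π ⟨k + 1, h⟩) ≤ blk n l m hmn (π ⟨k, Nat.lt_of_succ_lt h⟩)
      · rw [if_pos h2]
        have h3 := le_antisymm h2 (blk_mono n l m hmn h1)
        have h4 : swapW n l m (toWord n l m hmn π)
            (Equiv.swap ⟨k, Nat.lt_of_succ_lt h⟩ ⟨k + 1, h⟩) = toWord n l m hmn π := by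
          apply Subtype.ext
          funext i
          show blk n l m hmn (π (Equiv.swap _ _ i)) = blk n l m hmn (π i)
          rw [Equiv.swap_apply_def]
          split_ifs with a b
          · rw [a, h3]
          · rw [b, h3]
          · rfl
        rw [h4]; ring
      · rw [if_neg h2]
  · have : genMatP n q k = 0 := by ext a b; simp [genMatP, h]
    have h' : genMatW n l m q k = 0 := by ext a b; simp [genMatW, h]
    simp [this, h']

lemma X_lump_W (n l : ℕ) (m : Fin l → ℕ) (hm : ∀ j, 1 ≤ m j) (hmn : ∑ j, m j = n)
    (Q : ℕ) (hQ : 0 < Q)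
    (x : Fin n → ℂ) (hcompat : mCompatible n l m (Q : ℂ) x)
    (xb : Fin l → ℂ)
    (hxb : ∀ (j : Fin l) (iF : Fin n), (iF : ℕ) + 1 = nsum l m ((j : ℕ) + 1) →
      xb j = qInt (Q : ℂ) (m j) * x iF)
    (v : Words n l m → ℂ) : (XSnP n (Q : ℂ) x).mulVec (v ∘ toWord n l m hmn)
      = ((XW n l m (Q : ℂ) xb).mulVec v) ∘ toWord n l m hmn := by
  funext π
  have hl : nsum l m l = n := by rw [nsum_top, hmn]
  simp only [Matrix.mulVec, dotProduct, XSnP, XW, Function.comp_apply, ite_mul, zero_mul,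
    Finset.sum_ite_eq', Finset.mem_univ, if_true, Finset.sum_ite_eq]
  congr 1
  by_cases h : 0 < n
  · rw [dif_pos h, dif_pos h]
    set i : Fin n := π ⟨0, h⟩ with hi
    set j : Fin l := blk n l m hmn i with hj
    have hw : (toWord n l m hmn π).1 ⟨0, h⟩ = j := rfl
    rw [hw]
    have hs := nsum_succ l m j
    have hmj := hm j
    have hle := nsum_mono l m (show (j : ℕ) + 1 ≤ l from j.2)
    let iF : Fin n := ⟨nsum l m (j + 1) - 1, by omega⟩
    have hiF : (iF : ℕ) = nsum l m (j + 1) - 1 := rfl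
    rw [hxb j iF (by omega)]
    have hb : blockOf l m iF = j := (block_iff l m _ _ (by omega)).mpr ⟨by omega, by omega⟩
    rw [hcompat i iF (by rw [hb, hj]; rfl)]
    have he : ∑ t ∈ Finset.univ.filter (fun t : Fin l => j < t), m t = n - 1 - (iF : ℕ) := by
      have h1 : nsum l m (j + 1) + ∑ t ∈ Finset.univ.filter (fun t : Fin l => j < t), m t = n := by
        rw [← hmn, nsum, ← Finset.sum_filter_add_sum_filter_not Finset.univ
          (fun t : Fin l => (t : ℕ) < (j : ℕ) + 1)]
        congr 2
        ext t; simp only [Finset.mem_filter, Finset.mem_univ, true_and, Fin.lt_def]; omega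
      omega
    rw [he]
    have hq0 : qInt (Q : ℂ) (m j) ≠ 0 := by
      unfold qInt
      have : (∑ r ∈ Finset.range (m j), (Q : ℂ) ^ r) = ((∑ r ∈ Finset.range (m j), Q ^ r : ℕ) : ℂ) := by
        push_cast; rfl
      rw [this, Nat.cast_ne_zero]
      apply Nat.ne_of_gt
      apply Finset.sum_pos
      · intro r _; positivity
      · simp; omega
    have hQ' : (Q : ℂ) ≠ 0 := by exact_mod_cast hQ.ne'
    field_simp
  · rw [dif_neg h, dif_neg h]


/-! ### cosets to permutations -/

/-- `i` is the position of the first nonzero entry of `v` -/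
def Lead {F : Type} [Field F] {n : ℕ} (v : Fin n → F) (i : Fin n) : Prop :=
  v i ≠ 0 ∧ ∀ k, k < i → v k = 0

/-- `j` is the position of the last nonzero entry of `c` -/
def Deg {F : Type} [Field F] {n : ℕ} (c : Fin n → F) (j : Fin n) : Prop :=
  c j ≠ 0 ∧ ∀ k, j < k → c k = 0

/-- some vector of the `j`-th step of the flag of `g` has its leading entry in row `i` -/
def Att {F : Type} [Field F] {n : ℕ} (g : GL (Fin n) F) (j i : Fin n) : Prop :=
  ∃ c : Fin n → F, Deg c j ∧ Lead ((g : Matrix (Fin n) (Fin n) F).mulVec c) i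

/-- `π` is the permutation of the double coset of `g` -/
def IsPi {F : Type} [Field F] {n : ℕ} (g : GL (Fin n) F) (π : Equiv.Perm (Fin n)) : Prop :=
  ∀ j, Att g j (π j) ∧ ∀ i, Att g j i → i ≤ π j

section flag
variable {F : Type} [Field F] [Fintype F] [DecidableEq F] {n : ℕ}

lemma exists_lead (v : Fin n → F) (hv : v ≠ 0) : ∃ i, Lead v i := by
  have hne : ∃ i, v i ≠ 0 := by
    by_contra hc
    push Not at hc
    exact hv (funext hc)
  have hne' : (Finset.univ.filter fun i => v i ≠ 0).Nonempty := by
    obtain ⟨i, hi⟩ := hne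
    exact ⟨i, by simpa using hi⟩
  refine ⟨(Finset.univ.filter fun i => v i ≠ 0).min' hne', ?_, ?_⟩
  · simpa using Finset.min'_mem _ hne'
  · intro k hk
    by_contra hc
    exact absurd (Finset.min'_le _ k (by simpa using hc)) (not_le.mpr hk)

lemma mulVec_ne_zero (g : GL (Fin n) F) (c : Fin n → F) (hc : c ≠ 0) :
    (g : Matrix (Fin n) (Fin n) F).mulVec c ≠ 0 := by
  intro h
  apply hc
  have : ((g⁻¹ : GL (Fin n) F) : Matrix (Fin n) (Fin n) F).mulVec
      ((g : Matrix (Fin n) (Fin n) F).mulVec c) = c := by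
    rw [Matrix.mulVec_mulVec, ← Units.val_mul, inv_mul_cancel, Units.val_one, Matrix.one_mulVec]
  rw [h, Matrix.mulVec_zero] at this
  exact this.symm

lemma coe_mulVec (g h : GL (Fin n) F) (c : Fin n → F) :
    ((g * h : GL (Fin n) F) : Matrix (Fin n) (Fin n) F).mulVec c
      = (g : Matrix (Fin n) (Fin n) F).mulVec ((h : Matrix (Fin n) (Fin n) F).mulVec c) := by
  rw [Matrix.mulVec_mulVec, ← Units.val_mul]

lemma Deg.ne_zero {c : Fin n → F} {j : Fin n} (h : Deg c j) : c ≠ 0 := by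
  rintro rfl; exact h.1 rfl

/-- Two vectors with the same leading row: a combination has a later leading row. -/
lemma comb_lead (g : GL (Fin n) F) (c d : Fin n → F) (i : Fin n)
    (hc : Lead ((g : Matrix (Fin n) (Fin n) F).mulVec c) i)
    (hd : Lead ((g : Matrix (Fin n) (Fin n) F).mulVec d) i) :
    ∃ α β : F, α ≠ 0 ∧ β ≠ 0 ∧ (α • c - β • d ≠ 0 →
      ∃ i', i < i' ∧ Lead ((g : Matrix (Fin n) (Fin n) F).mulVec (α • c - β • d)) i') := by
  refine ⟨(g : Matrix (Fin n) (Fin n) F).mulVec d i, (g : Matrix (Fin n) (Fin n) F).mulVec c i,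
    hd.1, hc.1, ?_⟩
  intro hne
  obtain ⟨i', hi'⟩ := exists_lead _ (mulVec_ne_zero g _ hne)
  refine ⟨i', ?_, hi'⟩
  by_contra hle
  push Not at hle
  apply hi'.1
  rw [Matrix.mulVec_sub, Matrix.mulVec_smul, Matrix.mulVec_smul]
  simp only [Pi.sub_apply, Pi.smul_apply, smul_eq_mul]
  rcases hle.lt_or_eq with h | h
  · rw [hc.2 _ h, hd.2 _ h]; simp
  · rw [h]; ring

lemma exists_isPi (g : GL (Fin n) F) : ∃ π, IsPi g π := by
  have h1 : ∀ j, ∃ i, Att g j i ∧ ∀ i', Att g j i' → i' ≤ i := by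
    intro j
    have hne : (Finset.univ.filter fun i => Att g j i).Nonempty := by
      have hD : Deg (Pi.single j (1 : F)) j := by
        refine ⟨by simp, ?_⟩
        intro k hk
        simp [hk.ne']
      obtain ⟨i, hi⟩ := exists_lead _ (mulVec_ne_zero g _ hD.ne_zero)
      exact ⟨i, by simpa using ⟨_, hD, hi⟩⟩
    refine ⟨(Finset.univ.filter fun i => Att g j i).max' hne, ?_, ?_⟩
    · simpa using Finset.max'_mem _ hne
    · intro i' hi'
      exact Finset.le_max' _ _ (by simpa using hi')
  choose p hp hmax using h1
  have key : ∀ j k, j < k → p j ≠ p k := by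
    intro j k hjk he
    obtain ⟨c, hc, hcl⟩ := hp j
    obtain ⟨d, hd, hdl⟩ := hp k
    rw [he] at hcl
    obtain ⟨α, β, hα, hβ, hh⟩ := comb_lead g c d _ hcl hdl
    have hD : Deg (α • c - β • d) k := by
      constructor
      · simp [hc.2 k hjk, hβ, hd.1]
      · intro r hr
        simp [hc.2 r (hjk.trans hr), hd.2 r hr]
    obtain ⟨i', hi', hl⟩ := hh hD.ne_zero
    exact absurd (hmax k i' ⟨_, hD, hl⟩) (not_le.mpr hi')
  have hinj : Function.Injective p := by
    intro j k h
    rcases lt_trichotomy j k with h' | h' | h'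
    · exact absurd h (key j k h')
    · exact h'
    · exact absurd h.symm (key k j h')
  exact ⟨Equiv.ofBijective p (Finite.injective_iff_bijective.mp hinj), fun j => ⟨hp j, hmax j⟩⟩

lemma isPi_unique {g : GL (Fin n) F} {π σ : Equiv.Perm (Fin n)} (h : IsPi g π) (h' : IsPi g σ) :
    π = σ := by
  ext j
  exact congrArg Fin.val (le_antisymm ((h' j).2 _ (h j).1) ((h j).2 _ (h' j).1))

lemma deg_upper (b : GL (Fin n) F) (hb : upperTri (b : Matrix (Fin n) (Fin n) F))
    (c : Fin n → F) (j : Fin n) (hc : Deg c j) :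
    Deg ((b : Matrix (Fin n) (Fin n) F).mulVec c) j := by
  have hdiag : (b : Matrix (Fin n) (Fin n) F) j j ≠ 0 := by
    have hdet : IsUnit ((b : Matrix (Fin n) (Fin n) F).det) :=
      (Matrix.isUnit_iff_isUnit_det _).mp b.isUnit
    rw [Matrix.det_of_isUpperTriangular (M := (b : Matrix (Fin n) (Fin n) F)) hb] at hdet
    exact Finset.prod_ne_zero_iff.mp hdet.ne_zero j (Finset.mem_univ _)
  constructor
  · rw [Matrix.mulVec, dotProduct, Finset.sum_eq_single j]
    · exact mul_ne_zero hdiag hc.1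
    · intro k _ hk
      rcases lt_or_gt_of_ne hk with h | h
      · rw [hb _ _ h, zero_mul]
      · rw [hc.2 _ h, mul_zero]
    · simp
  · intro k hk
    rw [Matrix.mulVec, dotProduct]
    apply Finset.sum_eq_zero
    intro r _
    rcases lt_or_ge r k with h | h
    · rw [hb _ _ h, zero_mul]
    · rw [hc.2 _ (lt_of_lt_of_le hk h), mul_zero]

lemma isPi_mul_upper {g b : GL (Fin n) F} (hb : b ∈ Bsub F n) {π : Equiv.Perm (Fin n)}
    (h : IsPi (g * b) π) : IsPi g π := by
  have key : ∀ (g b : GL (Fin n) F), b ∈ Bsub F n → ∀ j i, Att (g * b) j i → Att g j i := by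
    rintro g b hb j i ⟨c, hc, hl⟩
    exact ⟨_, deg_upper b hb c j hc, by rwa [coe_mulVec] at hl⟩
  intro j
  refine ⟨key g b hb _ _ (h j).1, fun i hi => (h j).2 i ?_⟩
  have := key (g * b) b⁻¹ ((Bsub F n).inv_mem hb) j i
  rw [mul_inv_cancel_right] at this
  exact this hi

lemma perm_mulVec (s : Equiv.Perm (Fin n)) (c : Fin n → F) (i : Fin n) :
    ((permGL F n s : GL (Fin n) F) : Matrix (Fin n) (Fin n) F).mulVec c i = c (s.symm i) := by
  show (permMat F n s).mulVec c i = _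
  simp only [Matrix.mulVec, dotProduct, permMat, ite_mul, one_mul, zero_mul]
  rw [Finset.sum_eq_single (s.symm i)]
  · simp
  · intro b _ hb
    rw [if_neg]
    intro h; apply hb; rw [← h]; simp
  · simp

lemma isPi_perm (π : Equiv.Perm (Fin n)) : IsPi (permGL F n π) π := by
  intro j
  constructor
  · refine ⟨Pi.single j 1, ⟨by simp, fun k hk => by simp [hk.ne']⟩, ?_, ?_⟩
    · rw [perm_mulVec]; simp
    · intro k hk
      rw [perm_mulVec, Pi.single_eq_of_ne]
      intro h
      apply hk.ne
      rw [← h]; simp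
  · rintro i ⟨c, hc, hl⟩
    by_contra hlt
    push Not at hlt
    have := hl.2 _ hlt
    rw [perm_mulVec] at this
    simp at this
    exact hc.1 this

lemma transv_mulVec (r s : Fin n) (h : r ≠ s) (t : F) (c : Fin n → F) (i : Fin n) :
    ((transvGL F n r s h t : GL (Fin n) F) : Matrix (Fin n) (Fin n) F).mulVec c i
      = c i + if i = r then t * c s else 0 := by
  show (Matrix.transvection r s t).mulVec c i = _
  rw [Matrix.transvection, Matrix.add_mulVec, Matrix.one_mulVec, Pi.add_apply]
  congr 1
  simp only [Matrix.mulVec, dotProduct, Matrix.single_apply, ite_mul, zero_mul]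
  by_cases hi : i = r
  · subst hi; simp
  · rw [if_neg hi]
    apply Finset.sum_eq_zero
    intro k _
    rw [if_neg]
    rintro ⟨h1, _⟩; exact hi h1.symm

/-- the `q` elements `s_i` (at `t = 0`) and `f_i(t)` -/
def stepGL {F : Type} [Field F] [Fintype F] [DecidableEq F] {n : ℕ} (a b : Fin n) (h : b ≠ a) (t : F) : GL (Fin n) F :=
  if t = 0 then permGL F n (Equiv.swap a b) else transvGL F n b a h t

lemma step_other (a b : Fin n) (h : b ≠ a) (t : F) (c : Fin n → F) (i : Fin n)
    (ha : i ≠ a) (hb : i ≠ b) :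
    ((stepGL a b h t : GL (Fin n) F) : Matrix (Fin n) (Fin n) F).mulVec c i = c i := by
  unfold stepGL
  split_ifs with ht
  · rw [perm_mulVec, Equiv.symm_swap, Equiv.swap_apply_of_ne_of_ne ha hb]
  · rw [transv_mulVec]; simp [hb]

lemma step_a (a b : Fin n) (h : b ≠ a) (t : F) (c : Fin n → F) :
    ((stepGL a b h t : GL (Fin n) F) : Matrix (Fin n) (Fin n) F).mulVec c a
      = if t = 0 then c b else c a := by
  unfold stepGL
  split_ifs with ht
  · rw [perm_mulVec, Equiv.symm_swap, Equiv.swap_apply_left]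
  · rw [transv_mulVec]; simp [h.symm]

lemma step_b (a b : Fin n) (h : b ≠ a) (t : F) (c : Fin n → F) :
    ((stepGL a b h t : GL (Fin n) F) : Matrix (Fin n) (Fin n) F).mulVec c b
      = if t = 0 then c a else c b + t * c a := by
  unfold stepGL
  split_ifs with ht
  · rw [perm_mulVec, Equiv.symm_swap, Equiv.swap_apply_right]
  · rw [transv_mulVec]; simp

/-- `a`, `b` consecutive -/
lemma deg_step_other (a b : Fin n) (h : b ≠ a) (hab : (a : ℕ) + 1 = b) (t : F) (c : Fin n → F)
    (j : Fin n) (ha : j ≠ a) (hb : j ≠ b) (hc : Deg c j) :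
    Deg (((stepGL a b h t : GL (Fin n) F) : Matrix (Fin n) (Fin n) F).mulVec c) j := by
  refine ⟨by rw [step_other a b h t c j ha hb]; exact hc.1, ?_⟩
  intro k hk
  by_cases hka : k = a
  · subst hka
    rw [step_a, hc.2 _ hk, hc.2 b (by rw [Fin.lt_def] at *; omega)]; simp
  by_cases hkb : k = b
  · subst hkb
    have hja : j < a := by
      rw [Fin.lt_def] at *
      have : (j : ℕ) ≠ a := fun h => ha (Fin.ext h)
      omega
    rw [step_b, hc.2 _ hk, hc.2 a hja]; simp
  rw [step_other a b h t c k hka hkb, hc.2 _ hk]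

lemma deg_step_a (a b : Fin n) (h : b ≠ a) (hab : (a : ℕ) + 1 = b) (t : F) (c : Fin n → F)
    (hc : Deg c a) :
    Deg (((stepGL a b h t : GL (Fin n) F) : Matrix (Fin n) (Fin n) F).mulVec c) b := by
  have hlt : a < b := by rw [Fin.lt_def]; omega
  constructor
  · rw [step_b, hc.2 b hlt]
    split_ifs with ht
    · exact hc.1
    · rw [zero_add]; exact mul_ne_zero ht hc.1
  · intro k hk
    rw [step_other a b h t c k (hlt.trans hk).ne' hk.ne', hc.2 k (hlt.trans hk)]

lemma perm_cases (π σ : Equiv.Perm (Fin n)) (a b : Fin n) (hab : b ≠ a)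
    (h : ∀ j, j ≠ a → j ≠ b → σ j = π j) : σ = π ∨ σ = π * Equiv.swap a b := by
  have hτ : ∀ j, j ≠ a → j ≠ b → (π⁻¹ * σ) j = j := by
    intro j h1 h2
    simp [h j h1 h2]
  have hs : ∀ j, (π⁻¹ * σ) j = j ∨ j = a ∨ j = b := by
    intro j
    by_cases h1 : j = a
    · exact Or.inr (Or.inl h1)
    by_cases h2 : j = b
    · exact Or.inr (Or.inr h2)
    exact Or.inl (hτ j h1 h2)
  set τ := π⁻¹ * σ with hτd
  have hσ : σ = π * τ := by simp [hτd]
  have hva : τ a = a ∨ τ a = b := by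
    by_contra hc
    push Not at hc
    exact hc.1 (τ.injective (hτ _ hc.1 hc.2))
  have hvb : τ b = a ∨ τ b = b := by
    by_contra hc
    push Not at hc
    exact hc.2 (τ.injective (hτ _ hc.1 hc.2))
  rcases hva with ha | ha
  · left
    have hb : τ b = b := by
      rcases hvb with hb | hb
      · exact absurd (τ.injective (hb.trans ha.symm)) hab
      · exact hb
    have : τ = 1 := by
      ext j
      rcases hs j with h | h | h
      · rw [h]; rfl
      · rw [h, ha]; rfl
      · rw [h, hb]; rfl
    rw [hσ, this, mul_one]
  · right
    have hb : τ b = a := by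
      rcases hvb with hb | hb
      · exact hb
      · exact absurd (τ.injective (hb.trans ha.symm)) hab
    have : τ = Equiv.swap a b := by
      ext j
      by_cases h1 : j = a
      · subst h1; simp [ha]
      by_cases h2 : j = b
      · subst h2; simp [hb]
      rw [hτ j h1 h2, Equiv.swap_apply_of_ne_of_ne h1 h2]
    rw [hσ, this]

lemma deg_step_inv_other (a b : Fin n) (h : b ≠ a) (hab : (a : ℕ) + 1 = b) (t : F) (c : Fin n → F)
    (j : Fin n) (ha : j ≠ a) (hb : j ≠ b)
    (hc : Deg (((stepGL a b h t : GL (Fin n) F) : Matrix (Fin n) (Fin n) F).mulVec c) j) :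
    Deg c j := by
  refine ⟨by have := hc.1; rwa [step_other a b h t c j ha hb] at this, ?_⟩
  intro k hk
  have hboth : j < a → c a = 0 ∧ c b = 0 := by
    intro hja
    have h1 := hc.2 a hja
    have h2 := hc.2 b (by rw [Fin.lt_def] at *; omega)
    rw [step_a] at h1
    rw [step_b] at h2
    split_ifs at h1 h2 with ht
    · exact ⟨h2, h1⟩
    · rw [h1] at h2; exact ⟨h1, by simpa using h2⟩
  by_cases hka : k = a
  · subst hka; exact (hboth hk).1
  by_cases hkb : k = b
  · subst hkb
    refine (hboth ?_).2
    rw [Fin.lt_def] at *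
    have : (j : ℕ) ≠ a := fun h => ha (Fin.ext h)
    omega
  have := hc.2 k hk
  rwa [step_other a b h t c k hka hkb] at this

lemma isPi_step (g : GL (Fin n) F) (a b : Fin n) (h : b ≠ a) (hab : (a : ℕ) + 1 = b) (t : F)
    (π σ : Equiv.Perm (Fin n)) (hπ : IsPi g π) (hσ : IsPi (g * stepGL a b h t) σ) :
    (σ = π ∨ σ = π * Equiv.swap a b) ∧ σ a ≤ π b := by
  constructor
  · apply perm_cases π σ a b h
    intro j ha hb
    apply le_antisymm
    · obtain ⟨c, hc, hl⟩ := (hσ j).1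
      rw [coe_mulVec] at hl
      exact (hπ j).2 _ ⟨_, deg_step_other a b h hab t c j ha hb hc, hl⟩
    · obtain ⟨c, hc, hl⟩ := (hπ j).1
      set s := stepGL a b h t
      have hcs : (s : Matrix (Fin n) (Fin n) F).mulVec
          (((s⁻¹ : GL (Fin n) F) : Matrix (Fin n) (Fin n) F).mulVec c) = c := by
        rw [← coe_mulVec, mul_inv_cancel, Units.val_one, Matrix.one_mulVec]
      refine (hσ j).2 _ ⟨((s⁻¹ : GL (Fin n) F) : Matrix (Fin n) (Fin n) F).mulVec c, ?_, ?_⟩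
      · apply deg_step_inv_other a b h hab t _ j ha hb
        rw [hcs]; exact hc
      · rw [coe_mulVec, hcs]; exact hl
  · obtain ⟨c, hc, hl⟩ := (hσ a).1
    rw [coe_mulVec] at hl
    exact (hπ b).2 _ ⟨_, deg_step_a a b h hab t c hc, hl⟩

lemma step_desc (g : GL (Fin n) F) (a b : Fin n) (h : b ≠ a) (hab : (a : ℕ) + 1 = b) (t : F)
    (π σ : Equiv.Perm (Fin n)) (hπ : IsPi g π) (hσ : IsPi (g * stepGL a b h t) σ)
    (hlt : π b < π a) : σ = π * Equiv.swap a b := by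
  obtain ⟨h1 | h1, h2⟩ := isPi_step g a b h hab t π σ hπ hσ
  · rw [h1] at h2; exact absurd h2 (not_le.mpr hlt)
  · exact h1

lemma step_asc (g : GL (Fin n) F) (a b : Fin n) (h : b ≠ a) (hab : (a : ℕ) + 1 = b)
    (π : Equiv.Perm (Fin n)) (σ : F → Equiv.Perm (Fin n)) (hπ : IsPi g π)
    (hσ : ∀ t, IsPi (g * stepGL a b h t) (σ t))
    (hlt : π a < π b) : ∃ t₀, σ t₀ = π * Equiv.swap a b ∧ ∀ t, t ≠ t₀ → σ t = π := by
  have hablt : a < b := by rw [Fin.lt_def]; omega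
  -- existence
  have hex : ∃ t₀, σ t₀ = π * Equiv.swap a b := by
    obtain ⟨c, hc, hl⟩ := (hπ b).1
    obtain ⟨t, d, hd, hdc⟩ : ∃ (t : F) (d : Fin n → F), Deg d a ∧
        ((stepGL a b h t : GL (Fin n) F) : Matrix (Fin n) (Fin n) F).mulVec d = c := by
      by_cases hca : c a = 0
      · refine ⟨0, fun i => c (Equiv.swap a b i), ⟨by simpa using hc.1, ?_⟩, ?_⟩
        · intro k hk
          by_cases hkb : k = b
          · subst hkb; simpa using hca
          · show c (Equiv.swap a b k) = 0
            rw [Equiv.swap_apply_of_ne_of_ne hk.ne' hkb]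
            apply hc.2
            rw [Fin.lt_def] at *
            have : (k : ℕ) ≠ b := fun h => hkb (Fin.ext h)
            omega
        · funext i
          rw [stepGL, if_pos rfl, perm_mulVec]; simp
      · have ht : c b / c a ≠ 0 := div_ne_zero hc.1 hca
        refine ⟨c b / c a, Function.update c b 0, ⟨by simpa [hablt.ne] using hca, ?_⟩, ?_⟩
        · intro k hk
          by_cases hkb : k = b
          · subst hkb; simp
          · rw [Function.update_of_ne hkb]
            apply hc.2
            rw [Fin.lt_def] at *
            have : (k : ℕ) ≠ b := fun h => hkb (Fin.ext h)
            omega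
        · funext i
          rw [stepGL, if_neg ht, transv_mulVec]
          by_cases hib : i = b
          · subst hib; simp [hablt.ne, hca]
          · simp [hib]
    refine ⟨t, ?_⟩
    have h3 : π b ≤ σ t a := (hσ t a).2 _ ⟨d, hd, by rw [coe_mulVec, hdc]; exact hl⟩
    obtain ⟨h1 | h1, _⟩ := isPi_step g a b h hab t π (σ t) hπ (hσ t)
    · rw [h1] at h3; exact absurd h3 (not_le.mpr hlt)
    · exact h1
  obtain ⟨t₀, ht₀⟩ := hex
  refine ⟨t₀, ht₀, ?_⟩
  intro t hne
  obtain ⟨h1 | h1, _⟩ := isPi_step g a b h hab t π (σ t) hπ (hσ t)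
  · exact h1
  exfalso
  obtain ⟨c, hc, hcl⟩ := (hσ t a).1
  obtain ⟨d, hd, hdl⟩ := (hσ t₀ a).1
  rw [coe_mulVec, h1] at hcl
  rw [coe_mulVec, ht₀] at hdl
  simp only [Equiv.Perm.mul_apply, Equiv.swap_apply_left] at hcl hdl
  obtain ⟨α, β, hα, hβ, hh⟩ := comb_lead g _ _ _ hcl hdl
  set e := α • ((stepGL a b h t : GL (Fin n) F) : Matrix (Fin n) (Fin n) F).mulVec c
    - β • ((stepGL a b h t₀ : GL (Fin n) F) : Matrix (Fin n) (Fin n) F).mulVec d with he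
  have hbig : ∀ k, b < k → e k = 0 := by
    intro k hk
    have e1 := (deg_step_a a b h hab t c hc).2 k hk
    have e2 := (deg_step_a a b h hab t₀ d hd).2 k hk
    simp [he, e1, e2]
  have hea : e a = α * (if t = 0 then 0 else c a) - β * (if t₀ = 0 then 0 else d a) := by
    simp only [he, Pi.sub_apply, Pi.smul_apply, smul_eq_mul, step_a, hc.2 b hablt, hd.2 b hablt]
  have heb : e b = α * (if t = 0 then c a else t * c a) - β * (if t₀ = 0 then d a else t₀ * d a) := by
    simp only [he, Pi.sub_apply, Pi.smul_apply, smul_eq_mul, step_b, hc.2 b hablt, hd.2 b hablt,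
      zero_add]
  have hcases : Deg e b ∨ Deg e a := by
    by_cases hb0 : e b = 0
    · right
      refine ⟨?_, ?_⟩
      · intro ha0
        have hc1 := hc.1
        have hd1 := hd.1
        rw [ha0] at hea
        rw [hb0] at heb
        by_cases h1 : t = 0
        · have h2 : t₀ ≠ 0 := fun h => hne (h1.trans h.symm)
          simp [h1, h2, hβ, hd1] at hea
        · by_cases h2 : t₀ = 0
          · simp [h1, h2, hα, hc1] at hea
          · simp only [h1, h2, if_false] at hea heb
            apply hne
            have h3 : α * c a * (t - t₀) = 0 := by linear_combination t₀ * hea - heb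
            have h4 : α * c a ≠ 0 := mul_ne_zero hα hc1
            exact sub_eq_zero.mp ((mul_eq_zero.mp h3).resolve_left h4)
      · intro k hk
        by_cases hkb : k = b
        · rw [hkb, hb0]
        · apply hbig
          rw [Fin.lt_def] at *
          have : (k : ℕ) ≠ b := fun h => hkb (Fin.ext h)
          omega
    · exact Or.inl ⟨hb0, hbig⟩
  rcases hcases with hD | hD
  · obtain ⟨i', hi', hl⟩ := hh hD.ne_zero
    exact absurd ((hπ b).2 i' ⟨_, hD, hl⟩) (not_le.mpr hi')
  · obtain ⟨i', hi', hl⟩ := hh hD.ne_zero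
    exact absurd ((hπ a).2 i' ⟨_, hD, hl⟩) (not_le.mpr (hlt.trans hi'))

end flag

/-- the permutation of a coset -/
def phi (C : Cosets F n) : Equiv.Perm (Fin n) := (exists_isPi (C.out : GL (Fin n) F)).choose

lemma phi_spec (g : GL (Fin n) F) : IsPi g (phi F n (QuotientGroup.mk g)) := by
  have h := (exists_isPi ((QuotientGroup.mk g : Cosets F n).out : GL (Fin n) F)).choose_spec
  obtain ⟨b, hb⟩ := QuotientGroup.mk_out_eq_mul (Bsub F n) g
  rw [hb] at h
  have h2 := isPi_mul_upper b.2 h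
  convert h2 using 1
  unfold phi
  simp only [hb]

lemma phi_surj : Function.Surjective (phi F n) := fun π =>
  ⟨QuotientGroup.mk (permGL F n π), isPi_unique (phi_spec F n _) (isPi_perm π)⟩

lemma genGB_mulVec (k : ℕ) (h : k + 1 < n) (v : Cosets F n → ℂ) (C : Cosets F n)
    (hne : (⟨k + 1, h⟩ : Fin n) ≠ ⟨k, Nat.lt_of_succ_lt h⟩) :
    (genGB F n ℂ k).mulVec v C =
      ∑ t : F, v (QuotientGroup.mk
        (C.out * stepGL ⟨k, Nat.lt_of_succ_lt h⟩ ⟨k + 1, h⟩ hne t)) := by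
  rw [← Finset.add_sum_erase _ _ (Finset.mem_univ (0 : F))]
  simp only [Matrix.mulVec, dotProduct, genGB, dif_pos h, add_mul, Finset.sum_add_distrib]
  congr 1
  · simp [stepGL]
  · have hc : ∀ D : Cosets F n, ((Finset.univ.filter fun t : F => t ≠ 0 ∧
        (QuotientGroup.mk (C.out * transvGL F n ⟨k + 1, h⟩ ⟨k, Nat.lt_of_succ_lt h⟩
          hne t) : Cosets F n) = D).card : ℂ)
        = ∑ t ∈ Finset.univ.erase (0 : F), if (QuotientGroup.mk (C.out * transvGL F n ⟨k + 1, h⟩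
          ⟨k, Nat.lt_of_succ_lt h⟩ hne t) : Cosets F n) = D then (1 : ℂ) else 0 := by
      intro D
      rw [Finset.sum_boole]
      congr 2
      ext t
      simp
    simp only [hc, Finset.sum_mul]
    rw [Finset.sum_comm]
    apply Finset.sum_congr rfl
    intro t ht
    have ht0 : t ≠ 0 := Finset.ne_of_mem_erase ht
    simp [stepGL, ht0]

lemma gen_lump_GB (k : ℕ) (v : Equiv.Perm (Fin n) → ℂ) :
    (genGB F n ℂ k).mulVec (v ∘ phi F n)
      = ((genMatP n (Fintype.card F : ℂ) k).mulVec v) ∘ phi F n := by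
  funext C
  by_cases h : k + 1 < n
  · have hne : (⟨k + 1, h⟩ : Fin n) ≠ ⟨k, Nat.lt_of_succ_lt h⟩ := by simp [Fin.ext_iff]
    rw [genGB_mulVec F n k h _ C hne, Function.comp_apply, genP_mulVec n _ k h]
    simp only [Function.comp_apply]
    have hπ : IsPi (C.out : GL (Fin n) F) (phi F n C) := (exists_isPi (C.out : GL (Fin n) F)).choose_spec
    have hσ := fun t : F => phi_spec F n
      (C.out * stepGL ⟨k, Nat.lt_of_succ_lt h⟩ ⟨k + 1, h⟩ hne t)
    split_ifs with hlt
    · have := fun t => step_desc _ _ _ hne rfl t _ _ hπ (hσ t) hlt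
      simp only [this]
      simp
    · have hlt' : phi F n C ⟨k, Nat.lt_of_succ_lt h⟩ < phi F n C ⟨k + 1, h⟩ :=
        lt_of_le_of_ne (not_lt.mp hlt) fun he => hne ((phi F n C).injective he).symm
      obtain ⟨t₀, h1, h2⟩ := step_asc _ _ _ hne rfl _ _ hπ hσ hlt'
      rw [← Finset.add_sum_erase _ _ (Finset.mem_univ t₀), h1]
      congr 1
      rw [Finset.sum_congr rfl fun t ht => by rw [h2 t (Finset.ne_of_mem_erase ht)]]
      rw [Finset.sum_const, Finset.card_erase_of_mem (Finset.mem_univ _), Finset.card_univ,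
        nsmul_eq_mul, Nat.cast_sub Fintype.card_pos, Nat.cast_one]
  · have h1 : genGB F n ℂ k = 0 := by ext a b; simp [genGB, h]
    have h2 : genMatP n (Fintype.card F : ℂ) k = 0 := by ext a b; simp [genMatP, h]
    simp [h1, h2]

lemma pivot_eq (C : Cosets F n) (h : 0 < n) : pivotRow F n C = (phi F n C ⟨0, h⟩ : ℕ) := by
  have hπ : IsPi (C.out : GL (Fin n) F) (phi F n C) := (exists_isPi (C.out : GL (Fin n) F)).choose_spec
  obtain ⟨c, hc, hl⟩ := (hπ ⟨0, h⟩).1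
  have hcol : ∀ i, ((C.out : GL (Fin n) F) : Matrix (Fin n) (Fin n) F).mulVec c i
      = ((C.out : GL (Fin n) F) : Matrix (Fin n) (Fin n) F) i ⟨0, h⟩ * c ⟨0, h⟩ := by
    intro i
    rw [Matrix.mulVec, dotProduct, Finset.sum_eq_single ⟨0, h⟩]
    · intro k _ hk
      rw [hc.2 k, mul_zero]
      rw [Fin.lt_def]
      exact Nat.pos_of_ne_zero fun h0 => hk (Fin.ext h0)
    · simp
  have hmem : (phi F n C ⟨0, h⟩ : ℕ) ∈ {i : ℕ | ∃ h : i < n,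
    ((C.out : GLn F n) : Matrix (Fin n) (Fin n) F) ⟨i, h⟩
      ⟨0, Nat.lt_of_le_of_lt (Nat.zero_le i) h⟩ ≠ 0} := by
    refine ⟨(phi F n C ⟨0, h⟩).2, ?_⟩
    have := hl.1
    rw [hcol] at this
    exact left_ne_zero_of_mul this
  apply le_antisymm
  · exact Nat.sInf_le hmem
  · obtain ⟨h1, h2⟩ := Nat.sInf_mem ⟨_, hmem⟩
    by_contra hlt
    push Not at hlt
    have := hl.2 ⟨_, h1⟩ hlt
    rw [hcol] at this
    exact (mul_ne_zero h2 hc.1) this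

lemma X_lump_GB (x : Fin n → ℂ) (v : Equiv.Perm (Fin n) → ℂ) :
    (XGB F n ℂ x).mulVec (v ∘ phi F n)
      = ((XSnP n (Fintype.card F : ℂ) x).mulVec v) ∘ phi F n := by
  funext C
  simp only [Matrix.mulVec, dotProduct, XSnP, XGB, Function.comp_apply, ite_mul, zero_mul,
    Finset.sum_ite_eq', Finset.mem_univ, if_true]
  congr 1
  by_cases h : 0 < n
  · have hp := pivot_eq F n C h
    simp only [hp]
    rw [dif_pos (phi F n C ⟨0, h⟩).2, dif_pos h]
  · rw [dif_neg h, dif_neg (by omega)]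

/-- Let `q` be a prime power (the cardinality of the finite field `F`),
`m` a composition of `n` with positive parts, `x` `m`-compatible weights, and
`x̄_j = [m_j]_q x_{n_j}`.  Then the eigenvalue sets satisfy
`Λ_{W_m} ⊆ Λ_{S_n} ⊆ Λ_{G/B}`, and diagonalizability of `T_{G/B}(q,x)` implies that of
`T_{S_n}(q,x)` and of `T_{W_m}(q,x̄)`. -/
theorem qTsetlin_eigenvalue_containment (F : Type) [Field F] [Fintype F] [DecidableEq F]
    (n l : ℕ) (m : Fin l → ℕ) (hm : ∀ j, 1 ≤ m j) (hmn : ∑ j, m j = n)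
    (x : Fin n → ℂ) (hcompat : mCompatible n l m (Fintype.card F : ℂ) x)
    (xb : Fin l → ℂ)
    (hxb : ∀ (j : Fin l) (iF : Fin n), (iF : ℕ) + 1 = nsum l m ((j : ℕ) + 1) →
      xb j = qInt (Fintype.card F : ℂ) (m j) * x iF) :
    (eigSet (TWm n l m (Fintype.card F : ℂ) xb) ⊆
        eigSet (TSnP n (Fintype.card F : ℂ) x) ∧
      eigSet (TSnP n (Fintype.card F : ℂ) x) ⊆ eigSet (TGB F n ℂ x)) ∧
    (IsDiagonalizable (TGB F n ℂ x) →
      IsDiagonalizable (TSnP n (Fintype.card F : ℂ) x) ∧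
      IsDiagonalizable (TWm n l m (Fintype.card F : ℂ) xb)) := by
  have hW := fun v => prodGen_lump (toWord n l m hmn) n (genMatP n (Fintype.card F : ℂ))
    (prodGenP n (Fintype.card F : ℂ)) (genMatW n l m (Fintype.card F : ℂ))
    (prodGenW n l m (Fintype.card F : ℂ)) (XSnP n (Fintype.card F : ℂ) x)
    (XW n l m (Fintype.card F : ℂ) xb) rfl rfl (fun _ => rfl) (fun _ => rfl)
    (fun k v => gen_lump_W n l m hmn _ k v)
    (fun v => X_lump_W n l m hm hmn _ Fintype.card_pos x hcompat xb hxb v) v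
  have hG := fun v => prodGen_lump (phi F n) n (genGB F n ℂ) (prodGenGB F n ℂ)
    (genMatP n (Fintype.card F : ℂ)) (prodGenP n (Fintype.card F : ℂ)) (XGB F n ℂ x)
    (XSnP n (Fintype.card F : ℂ) x) rfl rfl (fun _ => rfl) (fun _ => rfl)
    (fun k v => gen_lump_GB F n k v) (fun v => X_lump_GB F n x v) v
  have sW := toWord_surj n l m hmn
  have sG := phi_surj F n
  refine ⟨⟨eig_of_lump _ _ _ sW hW, eig_of_lump _ _ _ sG hG⟩, fun hd => ?_⟩
  have hS := diag_of_lump _ _ _ sG hG hd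
  exact ⟨hS, diag_of_lump _ _ _ sW hW hS⟩

end QTsetlin
end
end
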